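/- arXiv:2306.10470 — 2 statements merged into one kernel-verified Lean document; each statement's English description precedes it below -/
import Mathlib

section
/- Let 0 < α < n, 0 < β < 1, and let b be a locally integrable real-valued function on Q_p^n. Suppose that for some variable exponent q(·) ∈ B(Q_p^n) there is a constant C such that for every ball B = B_γ(x), |B|_h^{−β/n} ‖(b − |B|_h^{−α/n} M_{α,B}^p(b)) χ_B‖_{L^{q(·)}} / ‖χ_B‖_{L^{q(·)}} ≤ C. Then b coincides almost everywhere with a function in Λ_β(Q_p^n). -/
open MeasureTheory ENNReal

noncomputable section

variable {p : ℕ} [Fact p.Prime] {n : ℕ}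

/-- The `p`-adic ball `B_γ(x) = {y : ‖y - x‖ ≤ p^γ}` in `ℚ_p^n`. -/
def pBall (x : Fin n → ℚ_[p]) (γ : ℤ) : Set (Fin n → ℚ_[p]) :=
  Metric.closedBall x ((p : ℝ) ^ γ)

variable [MeasurableSpace (Fin n → ℚ_[p])]

/-- The `p`-adic fractional maximal function `M_α^p f` (with values in `ℝ≥0∞`). -/
def fracMax (μ : Measure (Fin n → ℚ_[p])) (α : ℝ) (f : (Fin n → ℚ_[p]) → ℝ)
    (x : Fin n → ℚ_[p]) : ℝ≥0∞ :=
  ⨆ γ : ℤ, μ (pBall x γ) ^ (α / (n : ℝ) - 1) * ∫⁻ y in pBall x γ, (‖f y‖₊ : ℝ≥0∞) ∂μ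

/-- The fractional maximal function `M_{α,B*}^p f` restricted to a fixed ball `B*`. -/
def fracMaxOn (μ : Measure (Fin n → ℚ_[p])) (α : ℝ) (B : Set (Fin n → ℚ_[p]))
    (f : (Fin n → ℚ_[p]) → ℝ) (x : Fin n → ℚ_[p]) : ℝ≥0∞ :=
  ⨆ (γ : ℤ), ⨆ (_ : pBall x γ ⊆ B),
    μ (pBall x γ) ^ (α / (n : ℝ) - 1) * ∫⁻ y in pBall x γ, (‖f y‖₊ : ℝ≥0∞) ∂μ

/-- The maximal commutator `M_{α,b}^p f`. -/
def maxComm (μ : Measure (Fin n → ℚ_[p])) (α : ℝ) (b f : (Fin n → ℚ_[p]) → ℝ)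
    (x : Fin n → ℚ_[p]) : ℝ≥0∞ :=
  ⨆ γ : ℤ, μ (pBall x γ) ^ (α / (n : ℝ) - 1) *
    ∫⁻ y in pBall x γ, (‖b x - b y‖₊ : ℝ≥0∞) * (‖f y‖₊ : ℝ≥0∞) ∂μ

/-- The nonlinear commutator `[b, M_α^p] f = b · M_α^p f - M_α^p (b f)`. -/
def nlComm (μ : Measure (Fin n → ℚ_[p])) (α : ℝ) (b f : (Fin n → ℚ_[p]) → ℝ)
    (x : Fin n → ℚ_[p]) : ℝ :=
  b x * (fracMax μ α f x).toReal - (fracMax μ α (fun y => b y * f y) x).toReal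

/-- Membership in the `p`-adic Lipschitz space `Λ_β`. -/
def MemLipschitz (β : ℝ) (f : (Fin n → ℚ_[p]) → ℝ) : Prop :=
  ∃ C : ℝ, 0 ≤ C ∧ ∀ x y, |f x - f y| ≤ C * ‖x - y‖ ^ β

/-- The `p`-adic Lipschitz norm `‖f‖_{Λ_β}`. -/
def lipNorm (β : ℝ) (f : (Fin n → ℚ_[p]) → ℝ) : ℝ :=
  sSup {r : ℝ | ∃ x y : Fin n → ℚ_[p], x ≠ y ∧ r = |f x - f y| / ‖x - y‖ ^ β}

/-- The average `b_B` of `b` over a set `B`. -/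
def avg (μ : Measure (Fin n → ℚ_[p])) (B : Set (Fin n → ℚ_[p]))
    (b : (Fin n → ℚ_[p]) → ℝ) : ℝ :=
  (μ B).toReal⁻¹ * ∫ y in B, b y ∂μ

/-- The Luxemburg norm of an `ℝ≥0∞`-valued function. -/
def luxNormE (μ : Measure (Fin n → ℚ_[p])) (q : (Fin n → ℚ_[p]) → ℝ)
    (g : (Fin n → ℚ_[p]) → ℝ≥0∞) : ℝ≥0∞ :=
  sInf {η : ℝ≥0∞ | 0 < η ∧ η < ⊤ ∧ ∫⁻ x, (g x / η) ^ q x ∂μ ≤ 1}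

/-- The Luxemburg norm `‖f‖_{L^{q(·)}}` of a real-valued function. -/
def luxNorm (μ : Measure (Fin n → ℚ_[p])) (q : (Fin n → ℚ_[p]) → ℝ)
    (f : (Fin n → ℚ_[p]) → ℝ) : ℝ≥0∞ :=
  luxNormE μ q fun x => (‖f x‖₊ : ℝ≥0∞)

/-- The class `P(ℚ_p^n)` of variable exponents: `1 < r₋ ≤ r₊ < ∞`. -/
def IsPExp (μ : Measure (Fin n → ℚ_[p])) (r : (Fin n → ℚ_[p]) → ℝ) : Prop :=
  Measurable r ∧ (∀ x, 1 ≤ r x) ∧ 1 < essInf r μ ∧ ∃ M : ℝ, ∀ᵐ x ∂μ, r x ≤ M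

/-- The class `C^log(ℚ_p^n)` of globally log-Hölder continuous variable exponents. -/
def IsLogHolder (μ : Measure (Fin n → ℚ_[p])) (r : (Fin n → ℚ_[p]) → ℝ) : Prop :=
  Measurable r ∧ (∀ x, 1 ≤ r x) ∧
    ∃ C : ℝ, 0 ≤ C ∧
      (∀ (γ : ℤ) (x : Fin n → ℚ_[p]),
        (γ : ℝ) * (essInf r (μ.restrict (pBall x γ)) - essSup r (μ.restrict (pBall x γ))) ≤ C) ∧
      ∀ x y : Fin n → ℚ_[p], |r x - r y| ≤ C / Real.logb p ((p : ℝ) + min ‖x‖ ‖y‖)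

/-- The set of values whose supremum is the `lip_β^q` norm. -/
def lipqSet (μ : Measure (Fin n → ℚ_[p])) (β q : ℝ) (f : (Fin n → ℚ_[p]) → ℝ) : Set ℝ :=
  {r : ℝ | ∃ (x : Fin n → ℚ_[p]) (γ : ℤ),
    r = (μ (pBall x γ)).toReal ^ (-(β / (n : ℝ))) *
      ((μ (pBall x γ)).toReal⁻¹ * ∫ y in pBall x γ, |f y - avg μ (pBall x γ) f| ^ q ∂μ) ^ (1 / q)}

theorem exists_digit (z : ℚ_[p]) (γ : ℤ) (hz : ‖z‖ ≤ (p:ℝ)^(γ+1)) :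
    ∃ k : Fin p, ‖z - (k:ℕ) * (p:ℚ_[p])^(-(γ+1))‖ ≤ (p:ℝ)^γ := by
  have hp : (0:ℝ) < p := by exact_mod_cast (Fact.out : p.Prime).pos
  have hpne : (p:ℚ_[p]) ≠ 0 := by exact_mod_cast (Fact.out : p.Prime).ne_zero
  have h1 : ‖z * (p:ℚ_[p])^(γ+1)‖ ≤ 1 := by
    rw [norm_mul, Padic.norm_p_zpow]
    calc _ ≤ (p:ℝ)^(γ+1) * (p:ℝ)^(-(γ+1)) := by gcongr
      _ = 1 := by rw [← zpow_add₀ hp.ne']; simp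
  obtain ⟨k, hk, hk'⟩ := PadicInt.exists_mem_range (⟨_, h1⟩ : ℤ_[p])
  refine ⟨⟨k, hk⟩, ?_⟩
  have h2 : ‖z * (p:ℚ_[p])^(γ+1) - (k:ℚ_[p])‖ < 1 := by
    have := (PadicInt.mem_nonunits.1 ((IsLocalRing.mem_maximalIdeal _).1 hk'))
    exact this
  have h3 : ‖z * (p:ℚ_[p])^(γ+1) - (k:ℚ_[p])‖ ≤ (p:ℝ)^(-1:ℤ) := by
    rw [Padic.norm_le_pow_iff_norm_lt_pow_add_one]; simpa using h2
  have h4 : z - (k:ℕ) * (p:ℚ_[p])^(-(γ+1)) = (z * (p:ℚ_[p])^(γ+1) - (k:ℚ_[p])) * (p:ℚ_[p])^(-(γ+1)) := by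
    rw [sub_mul, mul_assoc, ← zpow_add₀ hpne]; simp
  simp only
  rw [h4, norm_mul, Padic.norm_p_zpow]
  calc _ ≤ (p:ℝ)^(-1:ℤ) * (p:ℝ)^(- -(γ+1)) := by gcongr
    _ = _ := by rw [← zpow_add₀ hp.ne']; congr 1; ring

theorem digit_unique (γ : ℤ) (k l : Fin p)
    (h : ‖((k:ℕ):ℚ_[p]) * (p:ℚ_[p])^(-(γ+1)) - (l:ℕ) * (p:ℚ_[p])^(-(γ+1))‖ ≤ (p:ℝ)^γ) : k = l := by
  have hp : (0:ℝ) < p := by exact_mod_cast (Fact.out : p.Prime).pos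
  rw [← sub_mul, norm_mul, Padic.norm_p_zpow] at h
  have h1 : ‖((k:ℕ):ℚ_[p]) - (l:ℕ)‖ ≤ (p:ℝ)^(-1:ℤ) := by
    calc _ = ‖((k:ℕ):ℚ_[p]) - (l:ℕ)‖ * (p:ℝ)^(- -(γ+1)) * (p:ℝ)^(-(γ+1)) := by
            rw [mul_assoc, ← zpow_add₀ hp.ne']; simp
      _ ≤ (p:ℝ)^γ * (p:ℝ)^(-(γ+1)) := by gcongr
      _ = _ := by rw [← zpow_add₀ hp.ne']; congr 1; ring
  rw [Padic.norm_le_pow_iff_norm_lt_pow_add_one] at h1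
  have h2 : ‖(((k:ℕ) - (l:ℕ) : ℤ) : ℚ_[p])‖ < 1 := by simpa using h1
  rw [Padic.norm_intCast_lt_one_iff] at h2
  have := Int.eq_zero_of_abs_lt_dvd h2 (by rw [abs_lt]; omega)
  ext; omega

theorem pBall_succ (γ : ℤ) : (pBall (0 : Fin n → ℚ_[p]) (γ+1)) =
    ⋃ k : Fin n → Fin p, pBall (fun i => ((k i : ℕ):ℚ_[p]) * (p:ℚ_[p])^(-(γ+1))) γ := by
  have hp : (0:ℝ) < p := by exact_mod_cast (Fact.out : p.Prime).pos
  have hp1 : (1:ℝ) ≤ p := by exact_mod_cast (Fact.out : p.Prime).one_le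
  have hpp : ∀ g : ℤ, (0:ℝ) ≤ (p:ℝ)^g := fun g => (zpow_pos hp g).le
  ext x
  simp only [pBall, Set.mem_iUnion, mem_closedBall_iff_norm, pi_norm_le_iff_of_nonneg (hpp _), Pi.sub_apply, sub_zero]
  constructor
  · intro h
    choose k hk using fun i => exists_digit (x i) γ (h i)
    exact ⟨k, hk⟩
  · rintro ⟨k, hk⟩ i
    have h1 : ‖((k i : ℕ):ℚ_[p]) * (p:ℚ_[p])^(-(γ+1))‖ ≤ (p:ℝ)^(γ+1) := by
      rw [norm_mul, Padic.norm_p_zpow, neg_neg]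
      have : ‖((k i : ℕ):ℚ_[p])‖ ≤ 1 := by simpa using Padic.norm_int_le_one (p := p) (k i : ℕ)
      exact mul_le_of_le_one_left (hpp _) this
    have h2 : ‖x i - ((k i : ℕ):ℚ_[p]) * (p:ℚ_[p])^(-(γ+1))‖ ≤ (p:ℝ)^(γ+1) :=
      (hk i).trans (zpow_le_zpow_right₀ hp1 (by omega))
    have := Padic.nonarchimedean (p := p) (x i - ((k i : ℕ):ℚ_[p]) * (p:ℚ_[p])^(-(γ+1))) (((k i : ℕ):ℚ_[p]) * (p:ℚ_[p])^(-(γ+1)))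
    rw [sub_add_cancel] at this
    exact this.trans (max_le h2 h1)

theorem measure_pBall_translate [BorelSpace (Fin n → ℚ_[p])]
    (μ : Measure (Fin n → ℚ_[p])) [μ.IsAddHaarMeasure] (x : Fin n → ℚ_[p]) (γ : ℤ) :
    μ (pBall x γ) = μ (pBall 0 γ) := by
  have : pBall x γ = (fun y => -x + y) ⁻¹' (pBall 0 γ) := by
    ext y; simp [pBall, sub_eq_add_neg, add_comm]
  rw [this, measure_preimage_add]

theorem measure_pBall_succ [BorelSpace (Fin n → ℚ_[p])]
    (μ : Measure (Fin n → ℚ_[p])) [μ.IsAddHaarMeasure] (γ : ℤ) :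
    μ (pBall 0 (γ+1)) = (p:ℝ≥0∞)^n * μ (pBall 0 γ) := by
  have hp : (0:ℝ) < p := by exact_mod_cast (Fact.out : p.Prime).pos
  rw [pBall_succ, measure_iUnion]
  · simp [measure_pBall_translate μ (fun i => _)]
  · intro k l hkl
    rw [Function.onFun, Set.disjoint_left]
    intro x hx hy
    apply hkl
    have h := IsUltrametricDist.closedBall_eq_of_mem hx
    have h' := IsUltrametricDist.closedBall_eq_of_mem hy
    have h2 := Metric.mem_closedBall_self (x := fun i => ((k i : ℕ):ℚ_[p]) * (p:ℚ_[p])^(-(γ+1))) (zpow_pos hp γ).le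
    rw [h, ← h', mem_closedBall_iff_norm, pi_norm_le_iff_of_nonneg (zpow_pos hp γ).le] at h2
    funext i
    exact digit_unique γ _ _ (h2 i)
  · intro k; exact Metric.isClosed_closedBall.measurableSet

theorem measure_pBall [BorelSpace (Fin n → ℚ_[p])]
    (μ : Measure (Fin n → ℚ_[p])) [μ.IsAddHaarMeasure] (hμ : μ (Metric.closedBall 0 1) = 1)
    (x : Fin n → ℚ_[p]) (γ : ℤ) :
    μ (pBall x γ) = ENNReal.ofReal ((p:ℝ)^((n:ℤ)*γ)) := by
  have hp : (0:ℝ) < p := by exact_mod_cast (Fact.out : p.Prime).pos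
  have hc : (p:ℝ≥0∞)^n = ENNReal.ofReal ((p:ℝ)^(n:ℤ)) := by
    rw [zpow_natCast, ENNReal.ofReal_pow hp.le, ENNReal.ofReal_natCast]
  have hs := fun γ => measure_pBall_succ μ γ
  rw [measure_pBall_translate]
  induction γ using Int.induction_on with
  | zero => simpa [pBall] using hμ
  | succ i ih =>
    rw [hs, ih, hc, ← ENNReal.ofReal_mul (zpow_pos hp _).le, ← zpow_add₀ hp.ne']
    congr 2; ring
  | pred i ih =>
    have := hs (-(i:ℤ) - 1)
    rw [sub_add_cancel, ih, hc] at this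
    have h0 : ENNReal.ofReal ((p:ℝ)^(n:ℤ)) ≠ 0 := (ENNReal.ofReal_pos.2 (_root_.zpow_pos hp _)).ne'
    rw [← ENNReal.mul_right_inj h0 ENNReal.ofReal_ne_top, ← this, ← ENNReal.ofReal_mul (zpow_pos hp _).le, ← zpow_add₀ hp.ne']
    congr 2; ring

theorem p_pos' (p : ℕ) [Fact p.Prime] : (0:ℝ) < p := by exact_mod_cast (Fact.out : p.Prime).pos
theorem one_lt_p' (p : ℕ) [Fact p.Prime] : (1:ℝ) < p := by exact_mod_cast (Fact.out : p.Prime).one_lt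

theorem measure_pBall_ne_zero [BorelSpace (Fin n → ℚ_[p])]
    (μ : Measure (Fin n → ℚ_[p])) [μ.IsAddHaarMeasure] (hμ : μ (Metric.closedBall 0 1) = 1)
    (x : Fin n → ℚ_[p]) (γ : ℤ) : μ (pBall x γ) ≠ 0 := by
  rw [measure_pBall μ hμ]
  exact (ENNReal.ofReal_pos.2 (_root_.zpow_pos (p_pos' p) _)).ne'

theorem measure_pBall_ne_top [BorelSpace (Fin n → ℚ_[p])]
    (μ : Measure (Fin n → ℚ_[p])) [μ.IsAddHaarMeasure] (hμ : μ (Metric.closedBall 0 1) = 1)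
    (x : Fin n → ℚ_[p]) (γ : ℤ) : μ (pBall x γ) ≠ ⊤ := by
  rw [measure_pBall μ hμ]
  exact ENNReal.ofReal_ne_top

theorem measurableSet_pBall [BorelSpace (Fin n → ℚ_[p])] (x : Fin n → ℚ_[p]) (γ : ℤ) :
    MeasurableSet (pBall x γ) := Metric.isClosed_closedBall.measurableSet

theorem integrableOn_pBall [BorelSpace (Fin n → ℚ_[p])]
    (μ : Measure (Fin n → ℚ_[p])) (b : (Fin n → ℚ_[p]) → ℝ) (hb : LocallyIntegrable b μ)
    (x : Fin n → ℚ_[p]) (γ : ℤ) : IntegrableOn b (pBall x γ) μ :=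
  hb.integrableOn_isCompact (isCompact_closedBall x _)

theorem isDoubling [BorelSpace (Fin n → ℚ_[p])]
    (μ : Measure (Fin n → ℚ_[p])) [μ.IsAddHaarMeasure] (hμ : μ (Metric.closedBall 0 1) = 1) :
    IsUnifLocDoublingMeasure μ := by
  refine ⟨⟨Real.toNNReal ((p:ℝ)^((n:ℤ)*2)), ?_⟩⟩
  filter_upwards [self_mem_nhdsWithin] with ε hε x
  obtain ⟨γ, h1, h2⟩ := _root_.exists_mem_Ico_zpow (show (0:ℝ) < ε from hε) (one_lt_p' p)
  have hp := p_pos' p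
  have hp2 : (2:ℝ) ≤ p := by exact_mod_cast (Fact.out : p.Prime).two_le
  have h3 : 2 * ε ≤ (p:ℝ)^(γ+2) := by
    rw [show γ + 2 = (γ+1)+1 by ring, zpow_add_one₀ hp.ne']
    nlinarith [_root_.zpow_pos hp (γ+1)]
  calc μ (Metric.closedBall x (2*ε)) ≤ μ (pBall x (γ+2)) :=
        measure_mono (Metric.closedBall_subset_closedBall h3)
    _ = ENNReal.ofReal ((p:ℝ)^((n:ℤ)*2)) * μ (pBall x γ) := by
        rw [measure_pBall μ hμ, measure_pBall μ hμ, ← ENNReal.ofReal_mul (_root_.zpow_pos hp _).le,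
          ← zpow_add₀ hp.ne']
        congr 2; ring
    _ ≤ _ := by
        gcongr
        · exact le_rfl
        · exact Metric.closedBall_subset_closedBall h1

theorem lebesgue_pt [BorelSpace (Fin n → ℚ_[p])]
    (μ : Measure (Fin n → ℚ_[p])) [μ.IsAddHaarMeasure] (hμ : μ (Metric.closedBall 0 1) = 1)
    (b : (Fin n → ℚ_[p]) → ℝ) (hb : LocallyIntegrable b μ) :
    ∀ᵐ x ∂μ, Filter.Tendsto (fun k : ℕ => avg μ (pBall x (-(k:ℤ))) b) Filter.atTop (nhds (b x)) := by
  have := isDoubling μ hμ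
  have hp := p_pos' p
  filter_upwards [IsUnifLocDoublingMeasure.ae_tendsto_average μ hb 1] with x hx
  have := hx (l := Filter.atTop) (fun _ : ℕ => x) (fun k : ℕ => (p:ℝ)^(-(k:ℤ))) ?_ ?_
  · simpa [setAverage_eq, avg, pBall, Measure.real] using this
  · rw [tendsto_nhdsWithin_iff]
    constructor
    · have := tendsto_pow_atTop_nhds_zero_of_lt_one (r := (p:ℝ)⁻¹) (by positivity)
        (inv_lt_one_of_one_lt₀ (one_lt_p' p))
      simpa using this
    · exact Filter.Eventually.of_forall fun k => _root_.zpow_pos hp _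
  · exact Filter.Eventually.of_forall fun k => Metric.mem_closedBall_self (by positivity)

theorem lintegral_eq_avg [BorelSpace (Fin n → ℚ_[p])]
    (μ : Measure (Fin n → ℚ_[p])) [μ.IsAddHaarMeasure] (hμ : μ (Metric.closedBall 0 1) = 1)
    (b : (Fin n → ℚ_[p]) → ℝ) (hb : LocallyIntegrable b μ) (x : Fin n → ℚ_[p]) (γ : ℤ) :
    (μ (pBall x γ))⁻¹ * ∫⁻ y in pBall x γ, (‖b y‖₊ : ℝ≥0∞) ∂μ =
      ENNReal.ofReal (avg μ (pBall x γ) fun y => |b y|) := by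
  have h0 := measure_pBall_ne_zero μ hμ x γ
  have h1 := measure_pBall_ne_top μ hμ x γ
  have := ofReal_integral_norm_eq_lintegral_enorm (integrableOn_pBall μ b hb x γ)
  rw [avg, ENNReal.ofReal_mul (by positivity), ENNReal.ofReal_inv_of_pos (ENNReal.toReal_pos h0 h1),
    ENNReal.ofReal_toReal h1]
  congr 1
  exact this.symm

theorem fracMaxOn_ne_top [BorelSpace (Fin n → ℚ_[p])]
    (μ : Measure (Fin n → ℚ_[p])) [μ.IsAddHaarMeasure] (hμ : μ (Metric.closedBall 0 1) = 1)
    (hn : 0 < n) (α : ℝ) (hα0 : 0 < α) (hαn : α < n)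
    (b : (Fin n → ℚ_[p]) → ℝ) (hb : LocallyIntegrable b μ) (x : Fin n → ℚ_[p]) (γ : ℤ) :
    ∀ᵐ z ∂μ, fracMaxOn μ α (pBall x γ) b z ≠ ⊤ := by
  have hn' : (0:ℝ) < n := by exact_mod_cast hn
  have he : α / n - 1 ≤ 0 := by rw [sub_nonpos, div_le_one hn']; exact hαn.le
  have hI : ∫⁻ y in pBall x γ, (‖b y‖₊ : ℝ≥0∞) ∂μ ≠ ⊤ := (integrableOn_pBall μ b hb x γ).2.ne
  filter_upwards [lebesgue_pt μ hμ (fun y => |b y|) (fun y => (hb y).norm)] with z hz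
  obtain ⟨T, hT⟩ := hz.bddAbove_range
  have hT' : ∀ k : ℕ, avg μ (pBall z (-(k:ℤ))) (fun y => |b y|) ≤ T := fun k => hT ⟨k, rfl⟩
  refine ne_top_of_le_ne_top (b := max (μ (pBall z 0) ^ (α/n) * ENNReal.ofReal T)
    (μ (pBall z 0) ^ (α/n-1) * ∫⁻ y in pBall x γ, (‖b y‖₊ : ℝ≥0∞) ∂μ)) ?_ ?_
  · have h0 := measure_pBall_ne_zero μ hμ z 0
    have h1 := measure_pBall_ne_top μ hμ z 0
    refine (max_lt ?_ ?_).ne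
    · exact (ENNReal.mul_ne_top (ENNReal.rpow_ne_top_of_ne_zero h0 h1) ENNReal.ofReal_ne_top).lt_top
    · exact (ENNReal.mul_ne_top (ENNReal.rpow_ne_top_of_ne_zero h0 h1) hI).lt_top
  · refine iSup_le fun g => iSup_le fun hg => ?_
    rcases le_total g 0 with h | h
    · refine le_max_of_le_left ?_
      obtain ⟨k, rfl⟩ := Int.exists_eq_neg_ofNat h
      have h0 := measure_pBall_ne_zero μ hμ z (-(k:ℤ))
      have h1 := measure_pBall_ne_top μ hμ z (-(k:ℤ))
      rw [sub_eq_add_neg, ENNReal.rpow_add _ _ h0 h1, ENNReal.rpow_neg_one, mul_assoc,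
        lintegral_eq_avg μ hμ b hb]
      gcongr
      · exact Metric.closedBall_subset_closedBall (zpow_le_zpow_right₀ (one_lt_p' p).le h)
      · exact hT' k
    · refine le_max_of_le_right ?_
      have : μ (pBall z 0) ≤ μ (pBall z g) :=
        measure_mono (Metric.closedBall_subset_closedBall (zpow_le_zpow_right₀ (one_lt_p' p).le h))
      refine mul_le_mul' ?_ (lintegral_mono_set hg)
      rw [show α / n - 1 = -(1 - α/n) by ring, ENNReal.rpow_neg, ENNReal.rpow_neg, ENNReal.inv_le_inv]
      exact ENNReal.rpow_le_rpow this (by linarith)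

theorem luxNormE_mono (μ : Measure (Fin n → ℚ_[p])) (q : (Fin n → ℚ_[p]) → ℝ) (hq : ∀ x, 1 ≤ q x)
    (f g : (Fin n → ℚ_[p]) → ℝ≥0∞) (h : ∀ᵐ x ∂μ, f x ≤ g x) : luxNormE μ q f ≤ luxNormE μ q g := by
  apply sInf_le_sInf
  rintro η ⟨h1, h2, h3⟩
  refine ⟨h1, h2, le_trans (lintegral_mono_ae ?_) h3⟩
  filter_upwards [h] with x hx
  have := hq x
  gcongr

theorem luxNormE_smul (μ : Measure (Fin n → ℚ_[p])) (q : (Fin n → ℚ_[p]) → ℝ)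
    (f : (Fin n → ℚ_[p]) → ℝ≥0∞) (c : ℝ≥0∞) (hc : c ≠ ⊤) :
    c * luxNormE μ q f ≤ luxNormE μ q (fun x => c * f x) := by
  rcases eq_or_ne c 0 with rfl | h0
  · simp
  apply le_sInf
  rintro η ⟨h1, h2, h3⟩
  rw [mul_comm, ← ENNReal.le_div_iff_mul_le (Or.inl h0) (Or.inl hc)]
  refine sInf_le ⟨ENNReal.div_pos h1.ne' hc, ENNReal.div_lt_top h2.ne h0, ?_⟩
  convert! h3 using 4 with x
  rw [ENNReal.div_eq_inv_mul, ENNReal.inv_div (Or.inl hc) (Or.inl h0), div_eq_mul_inv,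
    div_eq_mul_inv]
  ring

theorem luxNorm_indicator_lt_top [BorelSpace (Fin n → ℚ_[p])]
    (μ : Measure (Fin n → ℚ_[p])) [μ.IsAddHaarMeasure] (hμ : μ (Metric.closedBall 0 1) = 1)
    (q : (Fin n → ℚ_[p]) → ℝ) (hq : ∀ x, 1 ≤ q x) (x : Fin n → ℚ_[p]) (γ : ℤ) :
    luxNorm μ q (Set.indicator (pBall x γ) (fun _ => (1 : ℝ))) < ⊤ := by
  have h0 := measure_pBall_ne_zero μ hμ x γ
  have h1 := measure_pBall_ne_top μ hμ x γ
  set η := max 1 (μ (pBall x γ)) with hη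
  have e0 : η ≠ 0 := (lt_of_lt_of_le one_pos (le_max_left _ _)).ne'
  have e1 : η ≠ ⊤ := (max_lt ENNReal.one_lt_top h1.lt_top).ne
  refine lt_of_le_of_lt (sInf_le ⟨pos_iff_ne_zero.2 e0, e1.lt_top, ?_⟩) e1.lt_top
  calc _ ≤ ∫⁻ z, Set.indicator (pBall x γ) (fun _ => η⁻¹) z ∂μ := by
        apply lintegral_mono
        intro z
        have := hq z
        by_cases hz : z ∈ pBall x γ
        · simp only [Set.indicator_of_mem hz, nnnorm_one, ENNReal.coe_one, one_div]
          calc (η⁻¹)^(q z) ≤ (η⁻¹)^(1:ℝ) :=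
                ENNReal.rpow_le_rpow_of_exponent_ge (ENNReal.inv_le_one.2 (le_max_left _ _)) this
            _ = _ := by simp
        · simp [Set.indicator_of_notMem hz, show 0 < q z by linarith]
    _ = η⁻¹ * μ (pBall x γ) := lintegral_indicator_const (measurableSet_pBall x γ) _
    _ ≤ η⁻¹ * η := by gcongr; exact le_max_right _ _
    _ ≤ 1 := ENNReal.inv_mul_le_one _

theorem luxNorm_indicator_ne_zero [BorelSpace (Fin n → ℚ_[p])]
    (μ : Measure (Fin n → ℚ_[p])) [μ.IsAddHaarMeasure] (hμ : μ (Metric.closedBall 0 1) = 1)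
    (q : (Fin n → ℚ_[p]) → ℝ) (hq : ∀ x, 1 ≤ q x) (x : Fin n → ℚ_[p]) (γ : ℤ) :
    luxNorm μ q (Set.indicator (pBall x γ) (fun _ => (1 : ℝ))) ≠ 0 := by
  have h0 := measure_pBall_ne_zero μ hμ x γ
  have h1 := measure_pBall_ne_top μ hμ x γ
  suffices min 1 (μ (pBall x γ)) ≤ luxNorm μ q (Set.indicator (pBall x γ) (fun _ => (1 : ℝ))) from
    (lt_of_lt_of_le (lt_min one_pos (pos_iff_ne_zero.2 h0)) this).ne'
  apply le_sInf
  rintro η ⟨e0, e1, h3⟩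
  by_contra! hlt
  obtain ⟨hl1, hl2⟩ := lt_min_iff.1 hlt
  refine absurd h3 (not_le.2 ?_)
  calc 1 = η⁻¹ * η := (ENNReal.inv_mul_cancel e0.ne' e1.ne).symm
    _ < η⁻¹ * μ (pBall x γ) := ENNReal.mul_lt_mul_right (by simpa using e1.ne) (by simpa using e0.ne') hl2
    _ = ∫⁻ z, Set.indicator (pBall x γ) (fun _ => η⁻¹) z ∂μ :=
        (lintegral_indicator_const (measurableSet_pBall x γ) _).symm
    _ ≤ _ := by
        apply lintegral_mono
        intro z
        have := hq z
        by_cases hz : z ∈ pBall x γ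
        · simp only [Set.indicator_of_mem hz, nnnorm_one, ENNReal.coe_one, one_div]
          calc _ = (η⁻¹)^(1:ℝ) := by simp
            _ ≤ (η⁻¹)^(q z) :=
                ENNReal.rpow_le_rpow_of_exponent_le (ENNReal.one_le_inv.2 hl1.le) this
        · simp [Set.indicator_of_notMem hz]

theorem avg_le_of_max [BorelSpace (Fin n → ℚ_[p])]
    (μ : Measure (Fin n → ℚ_[p])) [μ.IsAddHaarMeasure] (hμ : μ (Metric.closedBall 0 1) = 1)
    (q : (Fin n → ℚ_[p]) → ℝ) (hq : ∀ x, 1 ≤ q x) (x : Fin n → ℚ_[p]) (γ : ℤ)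
    (f : (Fin n → ℚ_[p]) → ℝ) (hf : ∫⁻ y in pBall x γ, (‖f y‖₊ : ℝ≥0∞) ∂μ ≠ ⊤) :
    ((μ (pBall x γ))⁻¹ * ∫⁻ y in pBall x γ, (‖f y‖₊ : ℝ≥0∞) ∂μ) *
      luxNorm μ q (Set.indicator (pBall x γ) (fun _ => (1 : ℝ))) ≤ luxNormE μ q (fracMax μ 0 f) := by
  have h0 := measure_pBall_ne_zero μ hμ x γ
  refine (luxNormE_smul μ q _ _ (ENNReal.mul_ne_top (by simpa using h0) hf)).trans ?_
  apply luxNormE_mono μ q hq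
  refine Filter.Eventually.of_forall fun z => ?_
  by_cases hz : z ∈ pBall x γ
  · have hB : pBall x γ = pBall z γ := IsUltrametricDist.closedBall_eq_of_mem hz
    simp only [Set.indicator_of_mem hz, nnnorm_one, ENNReal.coe_one, mul_one]
    rw [hB]
    refine le_trans ?_ (le_iSup _ γ)
    simp [ENNReal.rpow_neg_one]
  · simp [Set.indicator_of_notMem hz]

theorem avg_abs_le_fracMaxOn [BorelSpace (Fin n → ℚ_[p])]
    (μ : Measure (Fin n → ℚ_[p])) [μ.IsAddHaarMeasure] (hμ : μ (Metric.closedBall 0 1) = 1)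
    (α : ℝ) (b : (Fin n → ℚ_[p]) → ℝ) (hb : LocallyIntegrable b μ) (x : Fin n → ℚ_[p]) (γ : ℤ)
    (z : Fin n → ℚ_[p]) (hz : z ∈ pBall x γ) (hM : fracMaxOn μ α (pBall x γ) b z ≠ ⊤) :
    avg μ (pBall x γ) b ≤ (μ (pBall x γ)).toReal ^ (-(α / (n : ℝ))) *
              (fracMaxOn μ α (pBall x γ) b z).toReal := by
  have h0 := measure_pBall_ne_zero μ hμ x γ
  have h1 := measure_pBall_ne_top μ hμ x γ
  have hB : pBall x γ = pBall z γ := IsUltrametricDist.closedBall_eq_of_mem hz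
  have h2 : avg μ (pBall x γ) b ≤ avg μ (pBall x γ) fun y => |b y| := by
    unfold avg
    have hi := integrableOn_pBall μ b hb x γ
    refine mul_le_mul_of_nonneg_left ?_ (by positivity)
    exact integral_mono hi hi.abs fun y => le_abs_self _
  have h3 : μ (pBall x γ) ^ (α / (n:ℝ)) * ENNReal.ofReal (avg μ (pBall x γ) fun y => |b y|)
      ≤ fracMaxOn μ α (pBall x γ) b z := by
    rw [← lintegral_eq_avg μ hμ b hb, ← mul_assoc, ← ENNReal.rpow_neg_one,
      ← ENNReal.rpow_add _ _ h0 h1, ← sub_eq_add_neg]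
    unfold fracMaxOn
    refine le_trans ?_ (le_iSup₂ (f := fun (g : ℤ) (_ : pBall z g ⊆ pBall x γ) =>
      μ (pBall z g) ^ (α / (n : ℝ) - 1) * ∫⁻ y in pBall z g, (‖b y‖₊ : ℝ≥0∞) ∂μ) γ hB.ge)
    rw [← hB]
  have h4 := ENNReal.toReal_mono hM h3
  rw [ENNReal.toReal_mul, ENNReal.toReal_ofReal, ← ENNReal.toReal_rpow] at h4
  swap
  · unfold avg; positivity
  have hpos := ENNReal.toReal_pos h0 h1
  calc _ ≤ avg μ (pBall x γ) fun y => |b y| := h2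
    _ = (μ (pBall x γ)).toReal ^ (-(α / (n : ℝ))) * ((μ (pBall x γ)).toReal ^ (α / (n : ℝ)) *
          avg μ (pBall x γ) fun y => |b y|) := by
        rw [← mul_assoc, ← Real.rpow_add hpos]; simp
    _ ≤ _ := by gcongr

theorem osc_bound [BorelSpace (Fin n → ℚ_[p])]
    (hn : 0 < n)
    (μ : Measure (Fin n → ℚ_[p])) [μ.IsAddHaarMeasure]
    (hμ : μ (Metric.closedBall 0 1) = 1)
    (α β : ℝ) (hα0 : 0 < α) (hαn : α < n)
    (b : (Fin n → ℚ_[p]) → ℝ) (hb : LocallyIntegrable b μ)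
    (q : (Fin n → ℚ_[p]) → ℝ) (hq : ∀ x, 1 ≤ q x)
    (C₀ : ℝ) (hC₀ : 0 < C₀) (hM : ∀ f : (Fin n → ℚ_[p]) → ℝ, Measurable f → luxNorm μ q f < ⊤ →
      luxNormE μ q (fracMax μ 0 f) ≤ ENNReal.ofReal C₀ * luxNorm μ q f)
    (C : ℝ) (hC : 0 ≤ C) (γ : ℤ) (x : (Fin n → ℚ_[p]))
    (hsup :
      μ (pBall x γ) ^ (-(β / (n : ℝ))) *
        (luxNorm μ q (Set.indicator (pBall x γ) (fun z =>
            b z - (μ (pBall x γ)).toReal ^ (-(α / (n : ℝ))) *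
              (fracMaxOn μ α (pBall x γ) b z).toReal)) /
          luxNorm μ q (Set.indicator (pBall x γ) (fun _ => (1 : ℝ)))) ≤ ENNReal.ofReal C) :
    avg μ (pBall x γ) (fun y => |b y - avg μ (pBall x γ) b|) ≤ 2 * (C₀ * C) * ((p:ℝ)^γ)^β := by
  have h0 := measure_pBall_ne_zero μ hμ x γ
  have h1 := measure_pBall_ne_top μ hμ x γ
  have hn' : (n:ℝ) ≠ 0 := by exact_mod_cast hn.ne'
  have hpos := ENNReal.toReal_pos h0 h1
  have hi := integrableOn_pBall μ b hb x γ
  set B := pBall x γ with hBdef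
  set h : (Fin n → ℚ_[p]) → ℝ := Set.indicator B (fun z =>
            b z - (μ B).toReal ^ (-(α / (n : ℝ))) * (fracMaxOn μ α B b z).toReal) with hh
  set N := luxNorm μ q (Set.indicator B (fun _ => (1 : ℝ))) with hN
  have N0 : N ≠ 0 := luxNorm_indicator_ne_zero μ hμ q hq x γ
  have N1 : N ≠ ⊤ := (luxNorm_indicator_lt_top μ hμ q hq x γ).ne
  set m := avg μ B b with hm
  -- measurable representative
  have hbm : AEStronglyMeasurable b μ := hb.aestronglyMeasurable
  set f : (Fin n → ℚ_[p]) → ℝ := Set.indicator B (fun z => max (m - hbm.mk b z) 0) with hf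
  have hfm : Measurable f :=
    ((measurable_const.sub hbm.stronglyMeasurable_mk.measurable).max measurable_const).indicator
      (measurableSet_pBall x γ)
  have hfb : f =ᵐ[μ] Set.indicator B (fun z => max (m - b z) 0) := by
    filter_upwards [hbm.ae_eq_mk] with z hz
    by_cases hzB : z ∈ B <;> simp [hf, hzB, hz]
  have hfh : ∀ᵐ z ∂μ, (‖f z‖₊ : ℝ≥0∞) ≤ ‖h z‖₊ := by
    filter_upwards [hfb, fracMaxOn_ne_top μ hμ hn α hα0 hαn b hb x γ] with z hz hzM
    by_cases hzB : z ∈ B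
    · have := avg_abs_le_fracMaxOn μ hμ α b hb x γ z hzB hzM
      rw [hz]
      norm_cast
      rw [← NNReal.coe_le_coe, coe_nnnorm, coe_nnnorm]
      simp only [hh, Set.indicator_of_mem hzB, Real.norm_eq_abs]
      rw [abs_of_nonneg (le_max_right _ _)]
      refine max_le ?_ (abs_nonneg _)
      rw [abs_sub_comm]
      refine le_trans ?_ (le_abs_self _)
      linarith
    · simp [hf, hzB]
  have hfl : luxNorm μ q f ≤ luxNorm μ q h := luxNormE_mono μ q hq _ _ hfh
  have hhl : luxNorm μ q h ≤ ENNReal.ofReal C * μ B ^ (β / (n:ℝ)) * N := by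
    have e0 : μ B ^ (β / (n:ℝ)) ≠ 0 := by simp [ENNReal.rpow_eq_zero_iff, h0, h1]
    have e1 : μ B ^ (β / (n:ℝ)) ≠ ⊤ := ENNReal.rpow_ne_top_of_ne_zero h0 h1
    rw [ENNReal.rpow_neg, ← ENNReal.div_eq_inv_mul, ENNReal.div_le_iff e0 e1,
      ENNReal.div_le_iff N0 N1] at hsup
    exact hsup
  have hhtop : luxNorm μ q h < ⊤ := by
    refine lt_of_le_of_lt hhl ?_
    exact (ENNReal.mul_ne_top (ENNReal.mul_ne_top ENNReal.ofReal_ne_top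
      (ENNReal.rpow_ne_top_of_ne_zero h0 h1)) N1).lt_top
  have hfi' : IntegrableOn (fun z => max (m - b z) 0) B μ := by
    have : IntegrableOn (fun z => m - b z) B μ :=
      (integrableOn_const (by exact h1)).sub hi
    exact this.pos_part
  have hfint : ∫⁻ y in B, (‖f y‖₊ : ℝ≥0∞) ∂μ = ENNReal.ofReal (∫ y in B, max (m - b y) 0 ∂μ) := by
    rw [ofReal_integral_eq_lintegral_ofReal hfi' (Filter.Eventually.of_forall fun y => le_max_right _ _)]
    apply setLIntegral_congr_fun_ae (measurableSet_pBall x γ)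
    filter_upwards [hfb] with y hy hyB
    rw [hy, Set.indicator_of_mem hyB]
    rw [← enorm_eq_nnnorm, Real.enorm_of_nonneg (le_max_right _ _)]
  have key := (avg_le_of_max μ hμ q hq x γ f (by rw [← hBdef, hfint]; exact ENNReal.ofReal_ne_top)).trans
    (hM f hfm (hfl.trans_lt hhtop))
  have key2 : (μ B)⁻¹ * ENNReal.ofReal (∫ y in B, max (m - b y) 0 ∂μ) ≤
      ENNReal.ofReal C₀ * (ENNReal.ofReal C * μ B ^ (β / (n:ℝ))) := by
    rw [← ENNReal.mul_le_mul_iff_left N0 N1, ← hfint]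
    refine key.trans ?_
    rw [mul_assoc]
    gcongr
    exact hfl.trans hhl
  have hpow : (μ B).toReal ^ (β / (n:ℝ)) = ((p:ℝ)^γ)^β := by
    have hp := p_pos' p
    rw [hBdef, measure_pBall μ hμ, ENNReal.toReal_ofReal (_root_.zpow_pos hp _).le,
      ← Real.rpow_intCast, ← Real.rpow_intCast, ← Real.rpow_mul hp.le, ← Real.rpow_mul hp.le]
    congr 1; push_cast; field_simp
  have key3 := ENNReal.toReal_mono (by
    exact ENNReal.mul_ne_top ENNReal.ofReal_ne_top (ENNReal.mul_ne_top ENNReal.ofReal_ne_top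
      (ENNReal.rpow_ne_top_of_ne_zero h0 h1))) key2
  have hint0 : 0 ≤ ∫ y in B, max (m - b y) 0 ∂μ := integral_nonneg fun y => le_max_right _ _
  rw [ENNReal.toReal_mul, ENNReal.toReal_inv, ENNReal.toReal_ofReal hint0, ENNReal.toReal_mul,
    ENNReal.toReal_mul, ENNReal.toReal_ofReal hC₀.le, ENNReal.toReal_ofReal hC,
    ← ENNReal.toReal_rpow, hpow] at key3
  have hsplit : ∫ y in B, |b y - m| ∂μ = 2 * ∫ y in B, max (m - b y) 0 ∂μ := by
    have e1 : ∫ y in B, (b y - m) ∂μ = 0 := by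
      rw [integral_sub hi (integrableOn_const (by exact h1)), setIntegral_const, hm, avg,
        Measure.real, smul_eq_mul, mul_inv_cancel_left₀ hpos.ne', sub_self]
    have e2 : ∀ y, |b y - m| = 2 * max (m - b y) 0 + (b y - m) := by
      intro y
      rcases le_total (b y) m with hle | hle
      · rw [abs_of_nonpos (by linarith), max_eq_left (by linarith)]; ring
      · rw [abs_of_nonneg (by linarith), max_eq_right (by linarith)]; ring
    simp_rw [e2]
    have e3 : IntegrableOn (fun y => b y - m) B μ := hi.sub (integrableOn_const (by exact h1))
    rw [integral_add (hfi'.const_mul 2) e3, e1, add_zero,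
      integral_const_mul]
  rw [avg, hsplit]
  linarith

theorem campanato [BorelSpace (Fin n → ℚ_[p])]
    (μ : Measure (Fin n → ℚ_[p])) [μ.IsAddHaarMeasure]
    (hμ : μ (Metric.closedBall 0 1) = 1)
    (β : ℝ) (hβ0 : 0 < β)
    (b : (Fin n → ℚ_[p]) → ℝ) (hb : LocallyIntegrable b μ) (K : ℝ) (hK : 0 ≤ K)
    (hosc : ∀ γ x, avg μ (pBall x γ) (fun y => |b y - avg μ (pBall x γ) b|) ≤ K * ((p:ℝ)^γ)^β) :
    ∃ g : (Fin n → ℚ_[p]) → ℝ, MemLipschitz β g ∧ b =ᵐ[μ] g := by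
  have hp := p_pos' p
  have hp1 := one_lt_p' p
  set a : (Fin n → ℚ_[p]) → ℤ → ℝ := fun x γ => avg μ (pBall x γ) b with ha
  -- consecutive averages
  have hstep : ∀ x γ, |a x (γ - 1) - a x γ| ≤ (p:ℝ)^n * K * ((p:ℝ)^γ)^β := by
    intro x γ
    have h0 := measure_pBall_ne_zero μ hμ x γ
    have h1 := measure_pBall_ne_top μ hμ x γ
    have h0' := measure_pBall_ne_zero μ hμ x (γ-1)
    have h1' := measure_pBall_ne_top μ hμ x (γ-1)
    have hi := integrableOn_pBall μ b hb x γ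
    have hi' := integrableOn_pBall μ b hb x (γ-1)
    have hpos' := ENNReal.toReal_pos h0' h1'
    have hsub : pBall x (γ-1) ⊆ pBall x γ :=
      Metric.closedBall_subset_closedBall (zpow_le_zpow_right₀ hp1.le (by omega))
    have e1 : a x (γ-1) - a x γ =
        (μ (pBall x (γ-1))).toReal⁻¹ * ∫ y in pBall x (γ-1), (b y - a x γ) ∂μ := by
      rw [integral_sub hi' (integrableOn_const (by exact h1')), setIntegral_const, mul_sub,
        Measure.real, smul_eq_mul, inv_mul_cancel_left₀ hpos'.ne']
      rfl
    have e2 : (μ (pBall x (γ-1))).toReal⁻¹ = (p:ℝ)^n * (μ (pBall x γ)).toReal⁻¹ := by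
      rw [measure_pBall μ hμ, measure_pBall μ hμ, ENNReal.toReal_ofReal (_root_.zpow_pos hp _).le,
        ENNReal.toReal_ofReal (_root_.zpow_pos hp _).le, ← zpow_neg, ← zpow_neg, ← zpow_natCast,
        ← zpow_add₀ hp.ne']
      congr 1; ring
    have hii : IntegrableOn (fun y => |b y - a x γ|) (pBall x γ) μ :=
      (hi.sub (integrableOn_const (by exact h1))).abs
    calc |a x (γ - 1) - a x γ|
        ≤ (μ (pBall x (γ-1))).toReal⁻¹ * ∫ y in pBall x (γ-1), |b y - a x γ| ∂μ := by
          rw [e1, abs_mul, abs_of_pos (inv_pos.2 hpos')]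
          gcongr
          exact abs_integral_le_integral_abs
      _ ≤ (μ (pBall x (γ-1))).toReal⁻¹ * ∫ y in pBall x γ, |b y - a x γ| ∂μ := by
          refine mul_le_mul_of_nonneg_left ?_ (by positivity)
          exact setIntegral_mono_set hii (Filter.Eventually.of_forall fun y => abs_nonneg _)
            hsub.eventuallyLE
      _ = (p:ℝ)^n * avg μ (pBall x γ) (fun y => |b y - avg μ (pBall x γ) b|) := by
          rw [e2, mul_assoc]; rfl
      _ ≤ (p:ℝ)^n * (K * ((p:ℝ)^γ)^β) := by gcongr; exact hosc γ x
      _ = _ := by ring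
  set r : ℝ := ((p:ℝ)⁻¹)^β with hr
  have hr1 : r < 1 := Real.rpow_lt_one (by positivity) (inv_lt_one_of_one_lt₀ hp1) hβ0
  have hgeo : ∀ x γ (k : ℕ), dist (a x (γ - k)) (a x (γ - (k+1:ℕ))) ≤
      ((p:ℝ)^n * K * ((p:ℝ)^γ)^β) * r^k := by
    intro x γ k
    have := hstep x (γ - k)
    rw [Real.dist_eq, abs_sub_comm]
    rw [show γ - (k+1:ℕ) = γ - k - 1 by push_cast; ring]
    refine this.trans (le_of_eq ?_)
    rw [mul_assoc _ _ (r^k)]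
    congr 1
    rw [hr, ← Real.rpow_mul_natCast (by positivity), mul_comm β, Real.rpow_natCast_mul (by positivity),
      ← Real.mul_rpow (by positivity) (by positivity), zpow_sub₀ hp.ne', zpow_natCast, inv_pow]
    rfl
  have hlim : ∀ x, ∃ l, Filter.Tendsto (fun k : ℕ => a x (-(k:ℤ))) Filter.atTop (nhds l) := by
    intro x
    have := cauchySeq_of_le_geometric r _ hr1 (hgeo x 0)
    simpa using cauchySeq_tendsto_of_complete this
  choose g hg using hlim
  have hgγ : ∀ x γ, Filter.Tendsto (fun k : ℕ => a x (γ - k)) Filter.atTop (nhds (g x)) := by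
    intro x γ
    obtain ⟨l, hl⟩ := cauchySeq_tendsto_of_complete (cauchySeq_of_le_geometric r _ hr1 (hgeo x γ))
    suffices l = g x by rwa [← this]
    rcases le_total 0 γ with h | h
    · obtain ⟨m, rfl⟩ := Int.eq_ofNat_of_zero_le h
      refine tendsto_nhds_unique ((Filter.tendsto_add_atTop_iff_nat m).2 hl) ?_
      refine (hg x).congr fun k => ?_
      congr 1; push_cast; ring
    · obtain ⟨m, rfl⟩ := Int.exists_eq_neg_ofNat h
      refine tendsto_nhds_unique hl ?_
      refine ((Filter.tendsto_add_atTop_iff_nat m).2 (hg x)).congr fun k => ?_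
      congr 1; push_cast; ring
  set K' := (p:ℝ)^n * K / (1 - r) with hK'
  have hr1' : 0 < 1 - r := by linarith
  have hK'0 : 0 ≤ K' := by positivity
  have hdist : ∀ x γ, |a x γ - g x| ≤ K' * ((p:ℝ)^γ)^β := by
    intro x γ
    have := dist_le_of_le_geometric_of_tendsto₀ r _ hr1 (hgeo x γ) (hgγ x γ)
    rw [Real.dist_eq] at this
    simp only [Nat.cast_zero, sub_zero] at this
    refine this.trans (le_of_eq ?_)
    rw [hK']; ring
  refine ⟨g, ⟨2 * K' * (p:ℝ)^β, by positivity, fun x y => ?_⟩, ?_⟩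
  · rcases eq_or_ne x y with rfl | hxy
    · simp; positivity
    obtain ⟨γ, h1, h2⟩ := _root_.exists_mem_Ioc_zpow (norm_pos_iff.2 (sub_ne_zero.2 hxy)) hp1
    have hB : pBall y (γ+1) = pBall x (γ+1) :=
      IsUltrametricDist.closedBall_eq_of_mem (mem_closedBall_iff_norm.2 h2)
    have ea : a x (γ+1) = a y (γ+1) := by simp only [ha, hB]
    have d1 := hdist x (γ+1)
    have d2 := hdist y (γ+1)
    rw [← ea] at d2
    calc |g x - g y| = |(a x (γ+1) - g y) - (a x (γ+1) - g x)| := by congr 1; ring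
      _ ≤ |a x (γ+1) - g y| + |a x (γ+1) - g x| := abs_sub _ _
      _ ≤ 2 * K' * ((p:ℝ)^(γ+1))^β := by linarith
      _ ≤ 2 * K' * ((p:ℝ) * ‖x - y‖)^β := by
          gcongr
          rw [zpow_add_one₀ hp.ne', mul_comm]
          gcongr
      _ = _ := by rw [Real.mul_rpow hp.le (norm_nonneg _)]; ring
  · filter_upwards [lebesgue_pt μ hμ b hb] with x hx
    exact tendsto_nhds_unique hx (hg x)

theorem lipschitz_of_fracMaxOn_luxNorm_bound
    (hn : 0 < n) [BorelSpace (Fin n → ℚ_[p])]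
    (μ : Measure (Fin n → ℚ_[p])) [μ.IsAddHaarMeasure]
    (hμ : μ (Metric.closedBall 0 1) = 1)
    (α β : ℝ) (hα0 : 0 < α) (hαn : α < n) (hβ0 : 0 < β) (hβ1 : β < 1)
    (b : (Fin n → ℚ_[p]) → ℝ) (hb : LocallyIntegrable b μ)
    (q : (Fin n → ℚ_[p]) → ℝ) (hq : IsPExp μ q)
    (hqB : ∃ C : ℝ, 0 < C ∧ ∀ f : (Fin n → ℚ_[p]) → ℝ, Measurable f → luxNorm μ q f < ⊤ →
      luxNormE μ q (fracMax μ 0 f) ≤ ENNReal.ofReal C * luxNorm μ q f)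
    (C : ℝ)
    (hsup : ∀ (γ : ℤ) (x : (Fin n → ℚ_[p])),
      μ (pBall x γ) ^ (-(β / (n : ℝ))) *
        (luxNorm μ q (Set.indicator (pBall x γ) (fun z =>
            b z - (μ (pBall x γ)).toReal ^ (-(α / (n : ℝ))) *
              (fracMaxOn μ α (pBall x γ) b z).toReal)) /
          luxNorm μ q (Set.indicator (pBall x γ) (fun _ => (1 : ℝ)))) ≤ ENNReal.ofReal C) :
    ∃ g : (Fin n → ℚ_[p]) → ℝ, MemLipschitz β g ∧ b =ᵐ[μ] g := by
  obtain ⟨C₀, hC₀, hM⟩ := hqB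
  refine campanato μ hμ β hβ0 b hb (2 * (C₀ * max C 0)) (by positivity) fun γ x => ?_
  exact osc_bound hn μ hμ α β hα0 hαn b hb q hq.2.1 C₀ hC₀ hM (max C 0) (le_max_right _ _) γ x
    ((hsup γ x).trans (ENNReal.ofReal_le_ofReal (le_max_left _ _)))

end
end

section
/- Let 0 < α < n and let r(·), q(·) ∈ C^log(Q_p^n) with r(·) ∈ P(Q_p^n), r_+ < n/α and 1/q(·) = 1/r(·) − α/n. Then the p-adic fractional maximal operator M_α^p is bounded from L^{r(·)}(Q_p^n) to L^{q(·)}(Q_p^n): there is C > 0 such that ‖M_α^p f‖_{L^{q(·)}} ≤ C ‖f‖_{L^{r(·)}} for all f ∈ L^{r(·)}(Q_p^n). -/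
open MeasureTheory ENNReal

noncomputable section

variable {p : ℕ} [Fact p.Prime] {n : ℕ}

variable [MeasurableSpace (Fin n → ℚ_[p])]

set_option linter.unusedSectionVars false

theorem pBall_eq_of_mem {x y : Fin n → ℚ_[p]} {γ : ℤ} (h : y ∈ pBall x γ) :
    pBall y γ = pBall x γ :=
  (IsUltrametricDist.closedBall_eq_of_mem h).symm

theorem pp_pos : (0 : ℝ) < (p : ℝ) := by
  exact_mod_cast (Fact.out : p.Prime).pos

theorem pp_one_lt : (1 : ℝ) < (p : ℝ) := by
  exact_mod_cast (Fact.out : p.Prime).one_lt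

theorem mem_pBall_self (x : Fin n → ℚ_[p]) (γ : ℤ) : x ∈ pBall x γ :=
  Metric.mem_closedBall_self (zpow_pos pp_pos _).le

theorem pBall_mono (x : Fin n → ℚ_[p]) {γ δ : ℤ} (h : γ ≤ δ) : pBall x γ ⊆ pBall x δ :=
  Metric.closedBall_subset_closedBall (zpow_le_zpow_right₀ pp_one_lt.le h)

theorem pBall_isOpen (x : Fin n → ℚ_[p]) (γ : ℤ) : IsOpen (pBall x γ) :=
  IsUltrametricDist.isOpen_closedBall x (zpow_pos pp_pos _).ne'

theorem pBall_mem_symm {x y : Fin n → ℚ_[p]} {γ : ℤ} (h : y ∈ pBall x γ) : x ∈ pBall y γ := by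
  rw [pBall_eq_of_mem h]; exact mem_pBall_self x γ

section meas
variable [BorelSpace (Fin n → ℚ_[p])] (μ : Measure (Fin n → ℚ_[p])) [μ.IsAddHaarMeasure]

theorem pBall_meas (x : Fin n → ℚ_[p]) (γ : ℤ) : MeasurableSet (pBall x γ) :=
  (pBall_isOpen x γ).measurableSet

theorem pBall_pos (x : Fin n → ℚ_[p]) (γ : ℤ) : μ (pBall x γ) ≠ 0 :=
  ((pBall_isOpen x γ).measure_pos μ ⟨x, mem_pBall_self x γ⟩).ne'

theorem pBall_top (x : Fin n → ℚ_[p]) (γ : ℤ) : μ (pBall x γ) ≠ ⊤ :=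
  (isCompact_closedBall x _).measure_lt_top.ne

theorem pBall_transl (x : Fin n → ℚ_[p]) (γ : ℤ) : μ (pBall x γ) = μ (pBall 0 γ) := by
  rw [← measure_preimage_add μ x (pBall x γ)]
  congr 1
  ext y
  simp [pBall]

theorem exists_growth : ∃ N : ℕ, 1 ≤ N ∧ ∀ γ : ℤ,
    μ (pBall (0 : Fin n → ℚ_[p]) (γ + 1)) ≤ N * μ (pBall (0 : Fin n → ℚ_[p]) γ) := by
  obtain ⟨t, _, htf, ht⟩ := (isCompact_closedBall (0 : Fin n → ℚ_[p]) (p : ℝ)).finite_cover_balls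
    one_pos
  lift t to Finset (Fin n → ℚ_[p]) using htf
  refine ⟨t.card + 1, by omega, fun γ => ?_⟩
  have hp0 : (p : ℚ_[p]) ≠ 0 := by exact_mod_cast (Fact.out : p.Prime).ne_zero
  have hsub : pBall (0 : Fin n → ℚ_[p]) (γ + 1) ⊆
      ⋃ x ∈ t, pBall (((p : ℚ_[p]) ^ (-γ)) • x) γ := by
    intro y hy
    have h1 : ((p : ℚ_[p]) ^ γ) • y ∈ Metric.closedBall (0 : Fin n → ℚ_[p]) (p : ℝ) := by
      have hy' : ‖y‖ ≤ (p : ℝ) ^ (γ + 1) := by simpa [pBall] using hy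
      rw [mem_closedBall_zero_iff, norm_smul, norm_zpow, Padic.norm_p]
      calc ((p : ℝ)⁻¹) ^ γ * ‖y‖ ≤ ((p : ℝ)⁻¹) ^ γ * (p : ℝ) ^ (γ + 1) := by
            gcongr
        _ = p := by
            rw [zpow_add₀ pp_pos.ne', inv_zpow, zpow_one, ← mul_assoc,
              inv_mul_cancel₀ (zpow_pos pp_pos _).ne', one_mul]
    obtain ⟨x, hx, hxy⟩ := Set.mem_iUnion₂.1 (ht h1)
    refine Set.mem_iUnion₂.2 ⟨x, hx, ?_⟩
    have h2 : y - ((p : ℚ_[p]) ^ (-γ)) • x = ((p : ℚ_[p]) ^ (-γ)) • (((p : ℚ_[p]) ^ γ) • y - x) := by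
      rw [smul_sub, smul_smul, zpow_neg, inv_mul_cancel₀ (zpow_ne_zero _ hp0), one_smul]
    rw [pBall, mem_closedBall_iff_norm, h2, norm_smul, norm_zpow, Padic.norm_p, inv_zpow, zpow_neg,
      inv_inv]
    rw [mem_ball_iff_norm] at hxy
    have := zpow_pos (pp_pos (p := p)) γ
    nlinarith
  calc μ (pBall (0 : Fin n → ℚ_[p]) (γ + 1)) ≤ μ (⋃ x ∈ t, pBall (((p : ℚ_[p]) ^ (-γ)) • x) γ) :=
        measure_mono hsub
    _ ≤ ∑ x ∈ t, μ (pBall (((p : ℚ_[p]) ^ (-γ)) • x) γ) := measure_biUnion_finset_le _ _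
    _ = ∑ x ∈ t, μ (pBall 0 γ) := Finset.sum_congr rfl fun x _ => pBall_transl μ _ _
    _ = t.card * μ (pBall 0 γ) := by simp
    _ ≤ _ := by gcongr; simp

theorem growth_up (hμ : μ (Metric.closedBall 0 1) = 1) {N : ℕ}
    (hN : ∀ γ : ℤ, μ (pBall (0 : Fin n → ℚ_[p]) (γ + 1)) ≤ N * μ (pBall (0 : Fin n → ℚ_[p]) γ))
    (k : ℕ) (x : Fin n → ℚ_[p]) : μ (pBall x k) ≤ (N : ℝ≥0∞) ^ k := by
  rw [pBall_transl]
  induction k with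
  | zero => simp [pBall, hμ]
  | succ k ih =>
    push_cast
    refine (hN k).trans ?_
    rw [pow_succ']
    gcongr

theorem growth_down (hμ : μ (Metric.closedBall 0 1) = 1) {N : ℕ}
    (hN : ∀ γ : ℤ, μ (pBall (0 : Fin n → ℚ_[p]) (γ + 1)) ≤ N * μ (pBall (0 : Fin n → ℚ_[p]) γ))
    (k : ℕ) (x : Fin n → ℚ_[p]) : (μ (pBall x (-(k : ℤ))))⁻¹ ≤ (N : ℝ≥0∞) ^ k := by
  rw [pBall_transl]
  suffices h : 1 ≤ (N : ℝ≥0∞) ^ k * μ (pBall (0 : Fin n → ℚ_[p]) (-(k : ℤ))) by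
    rw [← one_div]
    exact ENNReal.div_le_of_le_mul h
  induction k with
  | zero => simp [pBall, hμ]
  | succ k ih =>
    refine ih.trans ?_
    have := hN (-((k + 1 : ℕ) : ℤ))
    have e : -((k + 1 : ℕ) : ℤ) + 1 = -(k : ℤ) := by push_cast; ring
    rw [e] at this
    rw [pow_succ, mul_assoc]
    gcongr

/-- The fractional maximal operator on nonnegative functions, `a = α / n`. -/
def Mx (a : ℝ) (g : (Fin n → ℚ_[p]) → ℝ≥0∞) (x : Fin n → ℚ_[p]) : ℝ≥0∞ :=
  ⨆ γ : ℤ, μ (pBall x γ) ^ (a - 1) * ∫⁻ y in pBall x γ, g y ∂μ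

theorem Mx_measurable (a : ℝ) (g : (Fin n → ℚ_[p]) → ℝ≥0∞) : Measurable (Mx μ a g) := by
  refine Measurable.iSup fun γ => ?_
  refine Continuous.measurable ?_
  refine IsLocallyConstant.continuous ?_
  rw [IsLocallyConstant.iff_exists_open]
  intro x
  refine ⟨pBall x γ, pBall_isOpen x γ, mem_pBall_self x γ, fun y hy => ?_⟩
  rw [pBall_eq_of_mem hy]

/-- Weak type bound with radii bounded above. -/
theorem weak_bdd (N : ℤ) (g : (Fin n → ℚ_[p]) → ℝ≥0∞) (l : ℝ≥0∞) :
    l * μ {x | ∃ γ : ℤ, γ ≤ N ∧ l * μ (pBall x γ) < ∫⁻ y in pBall x γ, g y ∂μ} ≤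
      ∫⁻ y, g y ∂μ := by
  classical
  set P : (Fin n → ℚ_[p]) → ℤ → Prop := fun x γ =>
    γ ≤ N ∧ l * μ (pBall x γ) < ∫⁻ y in pBall x γ, g y ∂μ with hP
  set E := {x | ∃ γ : ℤ, P x γ} with hE
  have hmax : ∀ x : E, ∃ γ, P x γ ∧ ∀ δ, P x δ → δ ≤ γ := fun x =>
    Int.exists_greatest_of_bdd ⟨N, fun z hz => hz.1⟩ x.2
  choose G hG1 hG2 using hmax
  have hPinv : ∀ {x y : Fin n → ℚ_[p]} {γ}, y ∈ pBall x γ → P x γ → P y γ := by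
    intro x y γ h hx
    simp only [hP] at hx ⊢
    rwa [pBall_eq_of_mem h]
  let F : Set (Set (Fin n → ℚ_[p])) := Set.range fun x : E => pBall (x : Fin n → ℚ_[p]) (G x)
  have hkey : ∀ x y : E, G y ≤ G x →
      ((pBall (x : Fin n → ℚ_[p]) (G x)) ∩ (pBall (y : Fin n → ℚ_[p]) (G y))).Nonempty →
      pBall (x : Fin n → ℚ_[p]) (G x) = pBall (y : Fin n → ℚ_[p]) (G y) := by
    rintro x y hxy ⟨z, hz1, hz2⟩
    have hy : (y : Fin n → ℚ_[p]) ∈ pBall (x : Fin n → ℚ_[p]) (G x) := by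
      rw [← pBall_eq_of_mem hz1]
      exact pBall_mono z hxy (pBall_mem_symm hz2)
    have h2 := hG2 y _ (hPinv hy (hG1 x))
    have h3 : G y = G x := le_antisymm hxy h2
    rw [h3, pBall_eq_of_mem hy]
  have hdis : F.PairwiseDisjoint id := by
    rintro _ ⟨x, rfl⟩ _ ⟨y, rfl⟩ hne
    by_contra hnd
    rw [Function.onFun, Set.not_disjoint_iff_nonempty_inter] at hnd
    rcases le_total (G y) (G x) with h | h
    · exact hne (hkey x y h hnd)
    · exact hne (hkey y x h (by rw [Set.inter_comm]; exact hnd)).symm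
  have hcount : F.Countable := by
    refine hdis.countable_of_isOpen ?_ ?_
    · rintro _ ⟨x, rfl⟩; exact pBall_isOpen _ _
    · rintro _ ⟨x, rfl⟩; exact ⟨_, mem_pBall_self _ _⟩
  have hcov : E ⊆ ⋃ s ∈ F, s := fun x hx =>
    Set.mem_iUnion₂.2 ⟨_, ⟨⟨x, hx⟩, rfl⟩, mem_pBall_self _ _⟩
  have hFm : ∀ s ∈ F, MeasurableSet s := by
    rintro _ ⟨x, rfl⟩; exact pBall_meas _ _
  calc l * μ E ≤ l * ∑' s : F, μ (s : Set (Fin n → ℚ_[p])) := by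
        gcongr
        exact (measure_mono hcov).trans (measure_biUnion_le μ hcount _)
    _ = ∑' s : F, l * μ (s : Set (Fin n → ℚ_[p])) := ENNReal.tsum_mul_left.symm
    _ ≤ ∑' s : F, ∫⁻ y in (s : Set (Fin n → ℚ_[p])), g y ∂μ := by
        refine ENNReal.tsum_le_tsum ?_
        rintro ⟨_, ⟨x, rfl⟩⟩
        exact (hG1 x).2.le
    _ = ∫⁻ y in ⋃ s ∈ F, s, g y ∂μ := by
        rw [lintegral_biUnion hcount hFm hdis]
    _ ≤ ∫⁻ y, g y ∂μ := setLIntegral_le_lintegral _ _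

theorem weak_type (g : (Fin n → ℚ_[p]) → ℝ≥0∞) (l : ℝ≥0∞) :
    l * μ {x | l < Mx μ 0 g x} ≤ ∫⁻ y, g y ∂μ := by
  have hset : {x | l < Mx μ 0 g x} = ⋃ N : ℕ,
      {x | ∃ γ : ℤ, γ ≤ (N : ℤ) ∧ l * μ (pBall x γ) < ∫⁻ y in pBall x γ, g y ∂μ} := by
    ext x
    simp only [Set.mem_ofPred_eq, Set.mem_iUnion, Mx, lt_iSup_iff]
    have h1 : ∀ γ : ℤ, (l < μ (pBall x γ) ^ ((0 : ℝ) - 1) * ∫⁻ y in pBall x γ, g y ∂μ) ↔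
        l * μ (pBall x γ) < ∫⁻ y in pBall x γ, g y ∂μ := by
      intro γ
      rw [zero_sub, ENNReal.rpow_neg_one, mul_comm, ← div_eq_mul_inv,
        ENNReal.lt_div_iff_mul_lt (Or.inl (pBall_pos μ x γ)) (Or.inl (pBall_top μ x γ))]
    constructor
    · rintro ⟨γ, hγ⟩
      exact ⟨γ.toNat, γ, Int.self_le_toNat γ, (h1 γ).1 hγ⟩
    · rintro ⟨N, γ, -, hγ⟩
      exact ⟨γ, (h1 γ).2 hγ⟩
  rw [hset, Monotone.measure_iUnion, ENNReal.mul_iSup]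
  · exact iSup_le fun N => weak_bdd μ N g l
  · rintro a b hab x ⟨γ, h1, h2⟩
    exact ⟨γ, h1.trans (by exact_mod_cast hab), h2⟩

theorem dyadic_lower (t : ℝ≥0∞) {s : ℝ} (hs : 1 < s) :
    t ^ s ≤ ∑' k : ℤ, if (2 : ℝ≥0∞) ^ k < t then (2 * (2 : ℝ≥0∞) ^ k) ^ s else 0 := by
  have hs0 : 0 < s := by linarith
  rcases eq_or_ne t 0 with rfl | h0
  · simp [ENNReal.zero_rpow_of_pos hs0]
  rcases eq_or_ne t ⊤ with rfl | ht
  · have h1 : (⊤ : ℝ≥0∞) = ∑' _ : ℕ, (1 : ℝ≥0∞) :=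
      (ENNReal.tsum_const_eq_top_of_ne_zero one_ne_zero).symm
    rw [ENNReal.top_rpow_of_pos hs0, h1]
    refine le_trans ?_ (ENNReal.tsum_comp_le_tsum_of_injective
      (f := fun k : ℕ => (k : ℤ)) Nat.cast_injective _)
    refine ENNReal.tsum_le_tsum fun k => ?_
    have hlt : (2 : ℝ≥0∞) ^ (k : ℤ) < ∑' _ : ℕ, (1 : ℝ≥0∞) := by
      rw [← h1]; exact ENNReal.zpow_lt_top (by simp) (by simp) _
    rw [if_pos hlt]
    refine ENNReal.one_le_rpow ?_ hs0
    have : (1 : ℝ≥0∞) ≤ 2 ^ (k : ℤ) := by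
      rw [zpow_natCast]; exact one_le_pow₀ (by norm_num)
    calc (1 : ℝ≥0∞) = 1 * 1 := by simp
      _ ≤ _ := by gcongr; norm_num
  · obtain ⟨m, hm1, hm2⟩ := ENNReal.exists_mem_Ioc_zpow h0 ht (y := 2) (by norm_num) (by simp)
    refine le_trans ?_ (ENNReal.le_tsum m)
    rw [if_pos hm1]
    gcongr
    rw [ENNReal.zpow_add (by simp) (by simp), zpow_one, mul_comm] at hm2
    exact hm2

theorem dyadic_upper {s : ℝ} (hs : 1 < s) : ∃ K : ℝ≥0∞, K ≠ ⊤ ∧ ∀ t : ℝ≥0∞,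
    ∑' k : ℤ, (if (2 : ℝ≥0∞) ^ k < t then ((2 : ℝ≥0∞) ^ k) ^ (s - 1) else 0) ≤ K * t ^ (s - 1) := by
  have hs0 : 0 < s - 1 := by linarith
  set w : ℝ≥0∞ := (2⁻¹ : ℝ≥0∞) ^ (s - 1) with hw
  have hw1 : w < 1 := ENNReal.rpow_lt_one (by norm_num) hs0
  refine ⟨(1 - w)⁻¹, ?_, fun t => ?_⟩
  · rw [ENNReal.inv_ne_top]; exact (tsub_pos_of_lt hw1).ne'
  rcases eq_or_ne t 0 with rfl | h0
  · simp
  rcases eq_or_ne t ⊤ with rfl | ht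
  · rw [ENNReal.top_rpow_of_pos hs0, ENNReal.mul_top]
    · exact le_top
    · simp
  obtain ⟨m, hm1, hm2⟩ := ENNReal.exists_mem_Ioc_zpow h0 ht (y := 2) (by norm_num) (by simp)
  have hsupp : Function.support (fun k : ℤ =>
      (if (2 : ℝ≥0∞) ^ k < t then ((2 : ℝ≥0∞) ^ k) ^ (s - 1) else 0)) ⊆
      Set.range (fun j : ℕ => m - (j : ℤ)) := by
    intro k hk
    have hk' : (2 : ℝ≥0∞) ^ k < t := by
      by_contra h
      simp [h] at hk
    have hkm : k < m + 1 := by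
      by_contra h
      push Not at h
      have := ENNReal.zpow_le_of_le (x := 2) (by norm_num) h
      exact absurd (hk'.trans_le (hm2.trans this)) (lt_irrefl _)
    exact ⟨(m - k).toNat, by simp only []; omega⟩
  have hinj : Function.Injective (fun j : ℕ => m - (j : ℤ)) := by
    intro a b h; simp only [] at h; omega
  rw [← hinj.tsum_eq hsupp]
  calc ∑' j : ℕ, (if (2 : ℝ≥0∞) ^ (m - (j : ℤ)) < t then
          ((2 : ℝ≥0∞) ^ (m - (j : ℤ))) ^ (s - 1) else 0)
      ≤ ∑' j : ℕ, t ^ (s - 1) * w ^ j := by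
        refine ENNReal.tsum_le_tsum fun j => ?_
        split_ifs
        · have e : (2 : ℝ≥0∞) ^ (m - (j : ℤ)) = 2 ^ m * (2⁻¹) ^ j := by
            rw [sub_eq_add_neg, ENNReal.zpow_add (by simp) (by simp), ENNReal.zpow_neg,
              zpow_natCast, ENNReal.inv_pow]
          rw [e, ENNReal.mul_rpow_of_nonneg _ _ hs0.le, hw]
          gcongr
          rw [← ENNReal.rpow_natCast, ← ENNReal.rpow_mul, mul_comm, ENNReal.rpow_mul,
            ENNReal.rpow_natCast]
        · exact zero_le
    _ = t ^ (s - 1) * (1 - w)⁻¹ := by rw [ENNReal.tsum_mul_left, ENNReal.tsum_geometric]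
    _ = _ := mul_comm _ _

theorem trunc_subset (g : (Fin n → ℚ_[p]) → ℝ≥0∞) (d : ℝ≥0∞)
    (x : Fin n → ℚ_[p]) :
    Mx μ 0 g x ≤ Mx μ 0 ({y | d < g y}.indicator g) x + d := by
  refine iSup_le fun γ => ?_
  have h1 : ∫⁻ y in pBall x γ, g y ∂μ ≤
      ∫⁻ y in pBall x γ, ({y | d < g y}.indicator g) y ∂μ + d * μ (pBall x γ) := by
    rw [← setLIntegral_const, ← lintegral_add_right _ measurable_const]
    refine lintegral_mono fun y => ?_
    by_cases h : d < g y
    · simp [Set.indicator, h]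
    · simp only [Set.indicator, Set.mem_ofPred_eq, h, if_false, zero_add]
      exact not_lt.1 h
  calc _ ≤ μ (pBall x γ) ^ ((0 : ℝ) - 1) *
        (∫⁻ y in pBall x γ, ({y | d < g y}.indicator g) y ∂μ + d * μ (pBall x γ)) := by gcongr
    _ = μ (pBall x γ) ^ ((0 : ℝ) - 1) * (∫⁻ y in pBall x γ, ({y | d < g y}.indicator g) y ∂μ) + d := by
        rw [mul_add]
        congr 1
        rw [zero_sub, ENNReal.rpow_neg_one, mul_comm d, ← mul_assoc,
          ENNReal.inv_mul_cancel (pBall_pos μ x γ) (pBall_top μ x γ), one_mul]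
    _ ≤ _ := by
        gcongr
        exact le_iSup (fun γ : ℤ => μ (pBall x γ) ^ ((0 : ℝ) - 1) *
          ∫⁻ y in pBall x γ, ({y | d < g y}.indicator g) y ∂μ) γ

theorem strong_type {s : ℝ} (hs : 1 < s) : ∃ K : ℝ≥0∞, K ≠ ⊤ ∧
    ∀ g : (Fin n → ℚ_[p]) → ℝ≥0∞, Measurable g →
      ∫⁻ x, (Mx μ 0 g x) ^ s ∂μ ≤ K * ∫⁻ x, (g x) ^ s ∂μ := by
  obtain ⟨K, hK, hKs⟩ := dyadic_upper hs
  have hs0 : 0 < s := by linarith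
  refine ⟨(2 * 2) ^ s * K, ENNReal.mul_ne_top (ENNReal.rpow_ne_top_of_nonneg hs0.le (by norm_num)) hK,
    fun g hg => ?_⟩
  have hM := Mx_measurable μ 0 g
  have hset : ∀ k : ℤ, MeasurableSet {x | 2 * (2 : ℝ≥0∞) ^ k < Mx μ 0 g x} := fun k =>
    measurableSet_lt measurable_const hM
  have hpt : ∀ x, (Mx μ 0 g x) ^ s ≤ ∑' k : ℤ, (2 * 2) ^ s *
      {x | 2 * (2 : ℝ≥0∞) ^ k < Mx μ 0 g x}.indicator (fun _ => ((2 : ℝ≥0∞) ^ k) ^ s) x := by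
    intro x
    have e : Mx μ 0 g x = 2 * (Mx μ 0 g x / 2) := by
      rw [ENNReal.mul_div_cancel (by norm_num) (by norm_num)]
    calc (Mx μ 0 g x) ^ s = 2 ^ s * (Mx μ 0 g x / 2) ^ s := by
          conv_lhs => rw [e]
          rw [ENNReal.mul_rpow_of_nonneg _ _ hs0.le]
      _ ≤ 2 ^ s * ∑' k : ℤ, (if (2 : ℝ≥0∞) ^ k < Mx μ 0 g x / 2 then
            (2 * (2 : ℝ≥0∞) ^ k) ^ s else 0) := mul_le_mul_right (dyadic_lower _ hs) _
      _ = _ := by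
          rw [← ENNReal.tsum_mul_left]
          congr 1
          ext k
          have hiff : (2 : ℝ≥0∞) ^ k < Mx μ 0 g x / 2 ↔ 2 * (2 : ℝ≥0∞) ^ k < Mx μ 0 g x := by
            rw [ENNReal.lt_div_iff_mul_lt (by simp) (by simp), mul_comm]
          simp only [hiff, Set.indicator, Set.mem_ofPred_eq]
          split_ifs
          · rw [ENNReal.mul_rpow_of_nonneg _ _ hs0.le, ENNReal.mul_rpow_of_nonneg _ _ hs0.le,
              mul_assoc]
          · simp
  have hlev : ∀ k : ℤ, ((2 : ℝ≥0∞) ^ k) ^ s * μ {x | 2 * (2 : ℝ≥0∞) ^ k < Mx μ 0 g x} ≤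
      ((2 : ℝ≥0∞) ^ k) ^ (s - 1) * ∫⁻ y, {y | (2 : ℝ≥0∞) ^ k < g y}.indicator g y ∂μ := by
    intro k
    have hd0 : (2 : ℝ≥0∞) ^ k ≠ 0 := (ENNReal.zpow_pos (by simp) (by simp) k).ne'
    have hdt : (2 : ℝ≥0∞) ^ k ≠ ⊤ := ENNReal.zpow_ne_top (by simp) (by simp) k
    have e : ((2 : ℝ≥0∞) ^ k) ^ s = ((2 : ℝ≥0∞) ^ k) ^ (s - 1) * (2 : ℝ≥0∞) ^ k := by
      conv_rhs => rw [← ENNReal.rpow_one ((2 : ℝ≥0∞) ^ k), ← ENNReal.rpow_mul, one_mul]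
      rw [← ENNReal.rpow_add _ _ hd0 hdt]
      simp
    rw [e, mul_assoc]
    gcongr
    refine le_trans ?_ (weak_type μ _ ((2 : ℝ≥0∞) ^ k))
    refine mul_le_mul_right (measure_mono fun x hx => ?_) _
    have h1 := lt_of_lt_of_le hx (trunc_subset μ g ((2 : ℝ≥0∞) ^ k) x)
    rw [two_mul] at h1
    exact (ENNReal.add_lt_add_iff_right hdt).1 h1
  calc ∫⁻ x, (Mx μ 0 g x) ^ s ∂μ ≤ ∫⁻ x, ∑' k : ℤ, (2 * 2) ^ s *
      {x | 2 * (2 : ℝ≥0∞) ^ k < Mx μ 0 g x}.indicator (fun _ => ((2 : ℝ≥0∞) ^ k) ^ s) x ∂μ :=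
        lintegral_mono hpt
    _ = ∑' k : ℤ, (2 * 2) ^ s * (((2 : ℝ≥0∞) ^ k) ^ s *
          μ {x | 2 * (2 : ℝ≥0∞) ^ k < Mx μ 0 g x}) := by
        rw [lintegral_tsum]
        · congr 1
          ext k
          rw [lintegral_const_mul _ (measurable_const.indicator (hset k)),
            lintegral_indicator_const (hset k)]
        · exact fun k => ((measurable_const.indicator (hset k)).const_mul _).aemeasurable
    _ ≤ ∑' k : ℤ, (2 * 2) ^ s * (((2 : ℝ≥0∞) ^ k) ^ (s - 1) *
          ∫⁻ y, {y | (2 : ℝ≥0∞) ^ k < g y}.indicator g y ∂μ) :=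
        ENNReal.tsum_le_tsum fun k => mul_le_mul_right (hlev k) _
    _ = (2 * 2) ^ s * ∫⁻ y, ∑' k : ℤ, ((2 : ℝ≥0∞) ^ k) ^ (s - 1) *
          {y | (2 : ℝ≥0∞) ^ k < g y}.indicator g y ∂μ := by
        have hm : ∀ k : ℤ, Measurable ({y | (2 : ℝ≥0∞) ^ k < g y}.indicator g) := fun k =>
          hg.indicator (measurableSet_lt measurable_const hg)
        rw [ENNReal.tsum_mul_left, lintegral_tsum]
        · congr 2
          ext k
          rw [lintegral_const_mul _ (hm k)]
        · exact fun k => ((hm k).const_mul _).aemeasurable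
    _ ≤ (2 * 2) ^ s * ∫⁻ y, K * (g y) ^ s ∂μ := by
        gcongr with y
        have e : (g y) ^ s = (g y) ^ (s - 1) * g y := by
          conv_rhs => rw [← ENNReal.rpow_one (g y), ← ENNReal.rpow_mul, one_mul]
          rw [← ENNReal.rpow_add_of_nonneg _ _ (by linarith) (by norm_num)]
          simp
        rw [e, ← mul_assoc]
        refine le_trans (le_of_eq ?_) (mul_le_mul_left (hKs (g y)) (g y))
        rw [← ENNReal.tsum_mul_right]
        congr 1
        ext k
        simp only [Set.indicator, Set.mem_ofPred_eq]
        split_ifs <;> simp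
    _ = _ := by
        rw [lintegral_const_mul _ (hg.pow_const s), mul_assoc]

theorem jensen {s : ℝ} (hs : 1 ≤ s) {g : (Fin n → ℚ_[p]) → ℝ≥0∞} (hg : Measurable g)
    (x : Fin n → ℚ_[p]) (γ : ℤ) :
    ((μ (pBall x γ))⁻¹ * ∫⁻ y in pBall x γ, g y ∂μ) ^ s ≤
      (μ (pBall x γ))⁻¹ * ∫⁻ y in pBall x γ, (g y) ^ s ∂μ := by
  have hs0 : 0 < s := by linarith
  set ν : Measure (Fin n → ℚ_[p]) := (μ (pBall x γ))⁻¹ • μ.restrict (pBall x γ) with hν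
  have : IsProbabilityMeasure ν := ⟨by
    rw [hν, Measure.smul_apply, Measure.restrict_apply_univ, smul_eq_mul,
      ENNReal.inv_mul_cancel (pBall_pos μ x γ) (pBall_top μ x γ)]⟩
  have h := eLpNorm'_le_eLpNorm'_of_exponent_le one_pos hs ν hg.aestronglyMeasurable
  simp only [eLpNorm', enorm_eq_self, ENNReal.rpow_one, div_one] at h
  have h2 := ENNReal.rpow_le_rpow h hs0.le
  rw [← ENNReal.rpow_mul, one_div_mul_cancel hs0.ne', ENNReal.rpow_one] at h2
  rwa [hν, lintegral_smul_measure, lintegral_smul_measure] at h2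

theorem frac_alg {b I : ℝ≥0∞} (hb0 : b ≠ 0) (hbt : b ≠ ⊤) {a r q : ℝ} (ha : 0 ≤ a) (hr : 0 ≤ r)
    (hq : 0 ≤ q) (h : q = r + r * (a * q)) :
    (b ^ (a - 1) * I) ^ q = (b⁻¹ * I) ^ r * (b * (b⁻¹ * I) ^ r) ^ (a * q) := by
  have haq : 0 ≤ a * q := mul_nonneg ha hq
  have e : b ^ (a - 1) * I = b ^ a * (b⁻¹ * I) := by
    rw [sub_eq_add_neg, ENNReal.rpow_add _ _ hb0 hbt, ENNReal.rpow_neg_one, mul_assoc]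
  rw [e, ENNReal.mul_rpow_of_nonneg _ _ hq, ENNReal.mul_rpow_of_nonneg _ _ haq,
    ← ENNReal.rpow_mul, ← ENNReal.rpow_mul, mul_left_comm,
    ← ENNReal.rpow_add_of_nonneg _ _ hr (mul_nonneg hr haq), ← h]

theorem one_le_rpow_aux {t : ℝ≥0∞} (ht : 1 ≤ t) {u : ℝ} (hu : 0 ≤ u) : 1 ≤ t ^ u := by
  have := ENNReal.rpow_le_rpow ht hu
  rwa [ENNReal.one_rpow] at this

theorem Mx_rpow_le {a q : ℝ} (hq : 0 < q) (g : (Fin n → ℚ_[p]) → ℝ≥0∞) (x : Fin n → ℚ_[p])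
    {K : ℝ≥0∞}
    (h : ∀ γ : ℤ, (μ (pBall x γ) ^ (a - 1) * ∫⁻ y in pBall x γ, g y ∂μ) ^ q ≤ K) :
    (Mx μ a g x) ^ q ≤ K := by
  rw [← ENNReal.le_rpow_inv_iff hq]
  exact iSup_le fun γ => (ENNReal.le_rpow_inv_iff hq).2 (h γ)

theorem le_Mx_zero (g : (Fin n → ℚ_[p]) → ℝ≥0∞) (x : Fin n → ℚ_[p]) (γ : ℤ) :
    (μ (pBall x γ))⁻¹ * ∫⁻ y in pBall x γ, g y ∂μ ≤ Mx μ 0 g x := by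
  refine le_trans (le_of_eq ?_) (le_iSup (fun γ : ℤ => μ (pBall x γ) ^ ((0 : ℝ) - 1) *
          ∫⁻ y in pBall x γ, g y ∂μ) γ)
  rw [zero_sub, ENNReal.rpow_neg_one]

theorem good_points {r : (Fin n → ℚ_[p]) → ℝ} {R : ℝ} (hr1 : ∀ x, 1 ≤ r x) (hR : ∀ x, r x ≤ R) :
    ∀ᵐ x ∂μ, ∀ γ : ℤ, r x ≤ essSup r (μ.restrict (pBall x γ)) ∧
      essInf r (μ.restrict (pBall x γ)) ≤ r x := by
  rw [ae_all_iff]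
  intro γ
  obtain ⟨D, hDc, hDd⟩ := TopologicalSpace.exists_countable_dense (Fin n → ℚ_[p])
  have h1 : ∀ᵐ x ∂μ, ∀ d ∈ D, x ∈ pBall d γ → r x ≤ essSup r (μ.restrict (pBall d γ)) ∧
      essInf r (μ.restrict (pBall d γ)) ≤ r x := by
    rw [ae_ball_iff hDc]
    intro d _
    refine (ae_restrict_iff' (pBall_meas d γ)).1 ?_
    exact (_root_.ae_le_essSup (Filter.isBoundedUnder_of ⟨R, hR⟩)).and
      (ae_essInf_le (Filter.isBoundedUnder_of ⟨1, hr1⟩))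
  filter_upwards [h1] with x hx
  obtain ⟨d, hd, hdD⟩ := hDd.exists_mem_open (pBall_isOpen x γ) ⟨x, mem_pBall_self x γ⟩
  have := hx d hd (pBall_mem_symm hdD)
  rwa [pBall_eq_of_mem hdD] at this

theorem rpow_mono_big {t : ℝ≥0∞} (ht : t = 0 ∨ 1 ≤ t) {u v : ℝ} (hu : 0 < u) (huv : u ≤ v) :
    t ^ u ≤ t ^ v := by
  rcases ht with rfl | ht
  · rw [ENNReal.zero_rpow_of_pos hu]; exact zero_le
  · exact ENNReal.rpow_le_rpow_of_exponent_le ht huv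

theorem big_pointwise (hμ : μ (Metric.closedBall 0 1) = 1) {N : ℕ} (hN1 : 1 ≤ N)
    (hN : ∀ γ : ℤ, μ (pBall (0 : Fin n → ℚ_[p]) (γ + 1)) ≤ N * μ (pBall (0 : Fin n → ℚ_[p]) γ))
    {r : (Fin n → ℚ_[p]) → ℝ} {s C : ℝ} (hs : 1 < s)
    (hr1 : ∀ x, 1 ≤ r x) (hC : 0 ≤ C)
    (hlog : ∀ (γ : ℤ) (x : Fin n → ℚ_[p]),
        (γ : ℝ) * (essInf r (μ.restrict (pBall x γ)) - essSup r (μ.restrict (pBall x γ))) ≤ C)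
    (hrs : ∀ᵐ x ∂μ, s ≤ r x)
    {g : (Fin n → ℚ_[p]) → ℝ≥0∞} (hg : Measurable g) (hg1 : ∀ y, g y = 0 ∨ 1 ≤ g y)
    (hgr : ∫⁻ y, (g y) ^ (r y) ∂μ ≤ 1)
    {x : Fin n → ℚ_[p]} (hxs : s ≤ r x) (hxg : ∀ γ : ℤ, r x ≤ essSup r (μ.restrict (pBall x γ)))
    (hxi : ∀ γ : ℤ, essInf r (μ.restrict (pBall x γ)) ≤ r x)
    (γ : ℤ) :
    ((μ (pBall x γ))⁻¹ * ∫⁻ y in pBall x γ, g y ∂μ) ^ (r x) ≤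
      (((N : ℝ≥0∞) ^ C) ^ s) *
        ((μ (pBall x γ))⁻¹ * ∫⁻ y in pBall x γ, (g y) ^ (r y / s) ∂μ) ^ s := by
  have hs0 : 0 < s := by linarith
  have hNC : 1 ≤ (N : ℝ≥0∞) ^ C := one_le_rpow_aux (by exact_mod_cast hN1) hC
  have hNCs : 1 ≤ ((N : ℝ≥0∞) ^ C) ^ s := one_le_rpow_aux hNC hs0.le
  set b := μ (pBall x γ) with hb
  set A := b⁻¹ * ∫⁻ y in pBall x γ, g y ∂μ with hA
  set H := b⁻¹ * ∫⁻ y in pBall x γ, (g y) ^ (r y / s) ∂μ with hH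
  have hrss : ∀ᵐ y ∂(μ.restrict (pBall x γ)), s ≤ r y := ae_restrict_of_ae hrs
  rcases le_or_gt 0 γ with hγ | hγ
  · have hb1 : 1 ≤ b := by
      have h0 : μ (pBall x 0) = 1 := by
        rw [pBall_transl]; simpa [pBall] using hμ
      rw [← h0]; exact measure_mono (pBall_mono x hγ)
    have hA1 : A ≤ 1 := by
      calc A ≤ 1 * 1 := by
            rw [hA]
            refine mul_le_mul' (ENNReal.inv_le_one.2 hb1) ?_
            refine le_trans ?_ hgr
            refine (setLIntegral_le_lintegral _ _).trans (lintegral_mono fun y => ?_)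
            have := rpow_mono_big (hg1 y) one_pos (hr1 y)
            rwa [ENNReal.rpow_one] at this
        _ = 1 := by simp
    have hAH : A ≤ H := by
      refine mul_le_mul_right (lintegral_mono_ae ?_) _
      filter_upwards [hrss] with y hy
      have := rpow_mono_big (hg1 y) one_pos ((one_le_div hs0).2 hy)
      rwa [ENNReal.rpow_one] at this
    calc A ^ (r x) ≤ A ^ s := ENNReal.rpow_le_rpow_of_exponent_ge hA1 hxs
      _ ≤ H ^ s := by gcongr
      _ = 1 * H ^ s := (one_mul _).symm
      _ ≤ _ := by gcongr
  · set ρ := max s (essInf r (μ.restrict (pBall x γ))) with hρ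
    have hρs : s ≤ ρ := le_max_left _ _
    have hρ0 : 0 < ρ := by linarith
    have hρx : ρ ≤ r x := max_le hxs (hxi γ)
    have hρy : ∀ᵐ y ∂(μ.restrict (pBall x γ)), ρ ≤ r y := by
      have : ∀ᵐ y ∂(μ.restrict (pBall x γ)), essInf r (μ.restrict (pBall x γ)) ≤ r y :=
        ae_essInf_le (Filter.isBoundedUnder_of ⟨1, hr1⟩)
      filter_upwards [this, hrss] with y h1 h2 using max_le h2 h1
    have hAρ : A ^ (ρ / s) ≤ H := by
      refine (jensen μ ((one_le_div hs0).2 hρs) hg x γ).trans ?_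
      refine mul_le_mul_right (lintegral_mono_ae ?_) _
      filter_upwards [hρy] with y hy
      exact rpow_mono_big (hg1 y) (by positivity) (by gcongr)
    have hHb : H ≤ b⁻¹ := by
      calc H ≤ b⁻¹ * 1 := by
            refine mul_le_mul_right ?_ _
            refine le_trans ?_ hgr
            refine (setLIntegral_le_lintegral _ _).trans (lintegral_mono fun y => ?_)
            have h1 := hr1 y
            refine rpow_mono_big (hg1 y) (by positivity) ?_
            exact div_le_self (by linarith) hs.le
        _ = _ := mul_one _
    set e := (r x - ρ) / ρ with he
    have he0 : 0 ≤ e := div_nonneg (by linarith) hρ0.le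
    obtain ⟨k, rfl⟩ : ∃ k : ℕ, γ = -(k : ℤ) := ⟨γ.natAbs, by omega⟩
    have hke : (k : ℝ) * e ≤ C := by
      have h1 := hlog (-(k : ℤ)) x
      have h2 := hxg (-(k : ℤ))
      have h3 : essInf r (μ.restrict (pBall x (-(k : ℤ)))) ≤ ρ := le_max_right _ _
      push_cast at h1
      have h4 : e ≤ r x - ρ := div_le_self (by linarith) (by linarith)
      have hk : (0 : ℝ) ≤ k := Nat.cast_nonneg k
      calc (k : ℝ) * e ≤ k * (essSup r (μ.restrict (pBall x (-(k : ℤ)))) -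
            essInf r (μ.restrict (pBall x (-(k : ℤ))))) := by gcongr; linarith
        _ ≤ C := by linarith
    have hHe : H ^ e ≤ (N : ℝ≥0∞) ^ C := by
      calc H ^ e ≤ ((N : ℝ≥0∞) ^ k) ^ e := by
            gcongr
            exact hHb.trans (growth_down μ hμ hN k x)
        _ = (N : ℝ≥0∞) ^ ((k : ℝ) * e) := by
            rw [← ENNReal.rpow_natCast, ← ENNReal.rpow_mul]
        _ ≤ _ := ENNReal.rpow_le_rpow_of_exponent_le (by exact_mod_cast hN1) hke
    calc A ^ (r x) = ((A ^ (ρ / s)) ^ (1 + e)) ^ s := by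
          rw [← ENNReal.rpow_mul, ← ENNReal.rpow_mul]
          congr 1
          rw [he]
          field_simp
          ring
      _ ≤ (H ^ (1 + e)) ^ s := by gcongr
      _ = (H ^ e) ^ s * H ^ s := by
          rw [ENNReal.rpow_add_of_nonneg _ _ zero_le_one he0, ENNReal.rpow_one,
            ENNReal.mul_rpow_of_nonneg _ _ hs0.le, mul_comm]
      _ ≤ _ := by gcongr

theorem big_part (hμ : μ (Metric.closedBall 0 1) = 1) 
    {r q : (Fin n → ℚ_[p]) → ℝ} (hrm : Measurable r) {a s R C Q : ℝ} (hs : 1 < s)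
    (ha : 0 ≤ a)
    (hr1 : ∀ x, 1 ≤ r x) (hR : ∀ x, r x ≤ R) (hC : 0 ≤ C)
    (hq1 : ∀ x, 1 ≤ q x) (hQ : ∀ x, q x ≤ Q) (hqr : ∀ x, q x = r x + r x * (a * q x))
    (hlog : ∀ (γ : ℤ) (x : Fin n → ℚ_[p]),
        (γ : ℝ) * (essInf r (μ.restrict (pBall x γ)) - essSup r (μ.restrict (pBall x γ))) ≤ C)
    (hrs : ∀ᵐ x ∂μ, s ≤ r x) :
    ∃ K : ℝ≥0∞, K ≠ ⊤ ∧ ∀ g : (Fin n → ℚ_[p]) → ℝ≥0∞, Measurable g → (∀ y, g y = 0 ∨ 1 ≤ g y) →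
      ∫⁻ y, (g y) ^ (r y) ∂μ ≤ 1 → ∫⁻ x, (Mx μ a g x) ^ (q x) ∂μ ≤ K := by
  obtain ⟨N, hN1, hN⟩ := exists_growth μ
  obtain ⟨K, hK, hKs⟩ := strong_type μ hs
  have hs0 : 0 < s := by linarith
  have hQ0 : 0 ≤ Q := by linarith [hq1 0, hQ 0]
  have hNC : 1 ≤ (N : ℝ≥0∞) ^ C := one_le_rpow_aux (by exact_mod_cast hN1) hC
  set K0 := ((N : ℝ≥0∞) ^ C) ^ s with hK0
  have hK01 : 1 ≤ K0 := one_le_rpow_aux hNC hs0.le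
  have hK0t : K0 ≠ ⊤ := ENNReal.rpow_ne_top_of_nonneg hs0.le
    (ENNReal.rpow_ne_top_of_nonneg hC (by simp))
  refine ⟨K0 * K0 ^ (a * Q) * K, ENNReal.mul_ne_top (ENNReal.mul_ne_top hK0t
    (ENNReal.rpow_ne_top_of_nonneg (by positivity) hK0t)) hK, fun g hg hg1 hgr => ?_⟩
  have hGm : Measurable fun y => (g y) ^ (r y / s) := hg.pow (hrm.div_const s)
  have hGs : ∀ y, ((g y) ^ (r y / s)) ^ s = (g y) ^ (r y) := fun y => by
    rw [← ENNReal.rpow_mul, div_mul_cancel₀ _ hs0.ne']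
  have hpt : ∀ᵐ x ∂μ, (Mx μ a g x) ^ (q x) ≤
      K0 * K0 ^ (a * Q) * (Mx μ 0 (fun y => (g y) ^ (r y / s)) x) ^ s := by
    filter_upwards [hrs, good_points μ hr1 hR] with x h1 h23
    have h2 := fun γ => (h23 γ).1
    have h3 := fun γ => (h23 γ).2
    have hq0 : 0 < q x := by linarith [hq1 x]
    refine Mx_rpow_le μ hq0 g x fun γ => ?_
    have hb0 := pBall_pos μ x γ
    have hbt := pBall_top μ x γ
    have hmain := big_pointwise μ hμ hN1 hN hs hr1 hC hlog hrs hg hg1 hgr h1 h2 h3 γ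
    rw [← hK0] at hmain
    rw [frac_alg hb0 hbt ha (by linarith [hr1 x]) hq0.le (hqr x)]
    have hbA : μ (pBall x γ) * ((μ (pBall x γ))⁻¹ * ∫⁻ y in pBall x γ, g y ∂μ) ^ (r x) ≤ K0 := by
      calc _ ≤ μ (pBall x γ) * (K0 *
            ((μ (pBall x γ))⁻¹ * ∫⁻ y in pBall x γ, (g y) ^ (r y / s) ∂μ) ^ s) := by gcongr
        _ ≤ μ (pBall x γ) * (K0 *
            ((μ (pBall x γ))⁻¹ * ∫⁻ y in pBall x γ, ((g y) ^ (r y / s)) ^ s ∂μ)) := by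
            gcongr
            exact jensen μ hs.le hGm x γ
        _ = K0 * ∫⁻ y in pBall x γ, ((g y) ^ (r y / s)) ^ s ∂μ := by
            rw [mul_left_comm, ← mul_assoc (μ (pBall x γ)), ENNReal.mul_inv_cancel hb0 hbt, one_mul]
        _ ≤ K0 * 1 := by
            gcongr
            simp only [hGs]
            exact (setLIntegral_le_lintegral _ _).trans hgr
        _ = K0 := mul_one _
    calc _ ≤ (K0 * ((μ (pBall x γ))⁻¹ * ∫⁻ y in pBall x γ, (g y) ^ (r y / s) ∂μ) ^ s) *
          K0 ^ (a * q x) := by gcongr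
      _ ≤ (K0 * (Mx μ 0 (fun y => (g y) ^ (r y / s)) x) ^ s) * K0 ^ (a * Q) := by
          gcongr
          · exact le_Mx_zero μ (fun y => (g y) ^ (r y / s)) x γ
          · exact hQ x
      _ = _ := by ring
  calc ∫⁻ x, (Mx μ a g x) ^ (q x) ∂μ ≤ ∫⁻ x, K0 * K0 ^ (a * Q) *
        (Mx μ 0 (fun y => (g y) ^ (r y / s)) x) ^ s ∂μ := lintegral_mono_ae hpt
    _ = K0 * K0 ^ (a * Q) * ∫⁻ x, (Mx μ 0 (fun y => (g y) ^ (r y / s)) x) ^ s ∂μ :=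
        lintegral_const_mul _ ((Mx_measurable μ 0 _).pow_const s)
    _ ≤ K0 * K0 ^ (a * Q) * (K * ∫⁻ x, ((g x) ^ (r x / s)) ^ s ∂μ) := by
        gcongr
        exact hKs _ hGm
    _ ≤ K0 * K0 ^ (a * Q) * (K * 1) := by
        simp only [hGs]
        gcongr
    _ = _ := by rw [mul_one]

theorem compare_exp {t w : ℝ≥0∞} (ht : t ≤ 1) (hw : 1 ≤ w) (hwt : w ≠ ⊤) {u v C D m : ℝ}
    (hu : 1 ≤ u) (hD : 0 < D) (hm : 0 ≤ m) (hC : 0 ≤ C) (huv : |u - v| ≤ C / D) :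
    t ^ u ≤ w ^ (m * C) * t ^ v + w ^ (-(m * D)) := by
  have hw0 : w ≠ 0 := (zero_lt_one.trans_le hw).ne'
  rcases le_or_gt v u with h | h
  · calc t ^ u ≤ t ^ v := ENNReal.rpow_le_rpow_of_exponent_ge ht h
      _ = 1 * t ^ v := (one_mul _).symm
      _ ≤ w ^ (m * C) * t ^ v := by gcongr; exact one_le_rpow_aux hw (by positivity)
      _ ≤ _ := le_self_add
  rcases le_or_gt t (w ^ (-(m * D))) with h2 | h2
  · calc t ^ u ≤ t ^ (1 : ℝ) := ENNReal.rpow_le_rpow_of_exponent_ge ht hu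
      _ = t := ENNReal.rpow_one t
      _ ≤ _ := h2
      _ ≤ _ := le_add_self
  · have ht0 : t ≠ 0 := (zero_le.trans_lt h2).ne'
    have htt : t ≠ ⊤ := (ht.trans_lt ENNReal.one_lt_top).ne
    have h3 : t⁻¹ ≤ w ^ (m * D) := by
      rw [ENNReal.inv_le_iff_inv_le, ← ENNReal.rpow_neg]
      exact h2.le
    have h4 : (v - u) * D ≤ C := by
      rw [abs_sub_comm, abs_of_pos (by linarith), le_div_iff₀ hD] at huv
      exact huv
    have e : t ^ u = (t⁻¹) ^ (v - u) * t ^ v := by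
      rw [ENNReal.inv_rpow, ← ENNReal.rpow_neg, ← ENNReal.rpow_add _ _ ht0 htt]
      congr 1; ring
    calc t ^ u = (t⁻¹) ^ (v - u) * t ^ v := e
      _ ≤ (w ^ (m * D)) ^ (v - u) * t ^ v := by
          gcongr
      _ = w ^ (m * D * (v - u)) * t ^ v := by rw [← ENNReal.rpow_mul]
      _ ≤ w ^ (m * C) * t ^ v := by
          gcongr ?_ * _
          refine ENNReal.rpow_le_rpow_of_exponent_le hw ?_
          nlinarith
      _ ≤ _ := le_self_add

/-- `log_p (p + |x|)`. -/
def Dlog (x : Fin n → ℚ_[p]) : ℝ := Real.logb p ((p : ℝ) + ‖x‖)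

theorem one_le_logb {t : ℝ} (ht : 0 ≤ t) : 1 ≤ Real.logb p ((p : ℝ) + t) := by
  rw [Real.le_logb_iff_rpow_le pp_one_lt (by linarith [pp_pos (p := p)]), Real.rpow_one]
  linarith

theorem one_le_Dlog (x : Fin n → ℚ_[p]) : 1 ≤ Dlog x := one_le_logb (norm_nonneg x)

theorem tail_integrable (hμ : μ (Metric.closedBall 0 1) = 1) : ∃ m : ℝ, 0 ≤ m ∧
    ∫⁻ y : Fin n → ℚ_[p], (p : ℝ≥0∞) ^ (-(m * Dlog y)) ∂μ ≠ ⊤ := by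
  obtain ⟨N, hN1, hN⟩ := exists_growth μ
  have hp1 : (1 : ℝ≥0∞) ≤ p := by exact_mod_cast (Fact.out : p.Prime).one_lt.le
  have hp0 : (p : ℝ≥0∞) ≠ 0 := (zero_lt_one.trans_le hp1).ne'
  have hpt : (p : ℝ≥0∞) ≠ ⊤ := by simp
  refine ⟨N, Nat.cast_nonneg N, ?_⟩
  set w : ℝ≥0∞ := (p : ℝ≥0∞) ^ (-(N : ℝ)) with hw
  have hwN : w * N < 1 := by
    rw [hw, ENNReal.rpow_neg, ENNReal.rpow_natCast, mul_comm, ← div_eq_mul_inv]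
    refine ENNReal.div_lt_of_lt_mul ?_
    rw [one_mul]
    exact_mod_cast Nat.lt_pow_self (Fact.out : p.Prime).one_lt
  have hpt2 : ∀ y : Fin n → ℚ_[p], (p : ℝ≥0∞) ^ (-((N : ℝ) * Dlog y)) ≤
      ∑' k : ℕ, (p : ℝ≥0∞) ^ (N : ℝ) * (w ^ k * (pBall 0 (k : ℤ)).indicator (fun _ => 1) y) := by
    intro y
    have hex : ∃ k : ℕ, ‖y‖ ≤ (p : ℝ) ^ k := pow_unbounded_of_one_lt _ pp_one_lt |>.imp
      fun k hk => hk.le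
    classical
    refine le_trans ?_ (ENNReal.le_tsum (Nat.find hex))
    have hk := Nat.find_spec hex
    have hkm := fun j => Nat.find_min (m := j) hex
    generalize Nat.find hex = k at hk hkm
    have hmem : y ∈ pBall (0 : Fin n → ℚ_[p]) (k : ℤ) := by
      simpa [pBall] using hk
    have hDk : (k : ℝ) - 1 ≤ Dlog y := by
      rcases k with _ | k
      · have := one_le_Dlog y
        simp; linarith
      · have := hkm k (by omega)
        push Not at this
        rw [Dlog, Real.le_logb_iff_rpow_le pp_one_lt (by linarith [pp_pos (p := p), norm_nonneg y])]
        push_cast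
        rw [add_sub_cancel_right, Real.rpow_natCast]
        linarith [pp_pos (p := p)]
    rw [Set.indicator_of_mem hmem, mul_one, hw, ← ENNReal.rpow_natCast, ← ENNReal.rpow_mul,
      ← ENNReal.rpow_add _ _ hp0 hpt]
    refine ENNReal.rpow_le_rpow_of_exponent_le hp1 ?_
    have : (0 : ℝ) ≤ N := Nat.cast_nonneg N
    nlinarith
  have hm : ∀ k : ℕ, Measurable ((pBall (0 : Fin n → ℚ_[p]) (k : ℤ)).indicator
      (fun _ => (1 : ℝ≥0∞))) := fun k => measurable_const.indicator (pBall_meas _ _)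
  refine ne_top_of_le_ne_top ?_ (lintegral_mono hpt2)
  rw [lintegral_tsum fun k => (((hm k).const_mul _).const_mul _).aemeasurable]
  have hle : ∀ k : ℕ, ∫⁻ y, (p : ℝ≥0∞) ^ (N : ℝ) *
      (w ^ k * (pBall (0 : Fin n → ℚ_[p]) (k : ℤ)).indicator (fun _ => 1) y) ∂μ ≤
      (p : ℝ≥0∞) ^ (N : ℝ) * (w * N) ^ k := by
    intro k
    rw [lintegral_const_mul _ ((hm k).const_mul _), lintegral_const_mul _ (hm k),
      lintegral_indicator_const (pBall_meas _ _), one_mul, mul_pow]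
    gcongr
    exact growth_up μ hμ hN k 0
  refine ne_top_of_le_ne_top ?_ (ENNReal.tsum_le_tsum hle)
  rw [ENNReal.tsum_mul_left, ENNReal.tsum_geometric]
  refine ENNReal.mul_ne_top (ENNReal.rpow_ne_top_of_nonneg (Nat.cast_nonneg N) hpt) ?_
  rw [ENNReal.inv_ne_top]
  exact (tsub_pos_of_lt hwN).ne'

theorem Dlog_measurable : Measurable (Dlog : (Fin n → ℚ_[p]) → ℝ) := by
  unfold Dlog Real.logb
  fun_prop

theorem small_part (hμ : μ (Metric.closedBall 0 1) = 1)
    {r q : (Fin n → ℚ_[p]) → ℝ} (hrm : Measurable r) (hqm : Measurable q) {a C Q ri qi : ℝ}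
    (ha : 0 ≤ a) (hC : 0 ≤ C) (hri : 1 < ri) (hqi : 1 ≤ qi) (hqri : qi = ri + ri * (a * qi))
    (hq1 : ∀ x, 1 ≤ q x) (hQ : ∀ x, q x ≤ Q)
    (hrc : ∀ x, |r x - ri| ≤ C / Dlog x) (hqc : ∀ x, |q x - qi| ≤ C / Dlog x) :
    ∃ K : ℝ≥0∞, K ≠ ⊤ ∧ ∀ g : (Fin n → ℚ_[p]) → ℝ≥0∞, Measurable g → (∀ y, g y ≤ 1) →
      ∫⁻ y, (g y) ^ (r y) ∂μ ≤ 1 → ∫⁻ x, (Mx μ a g x) ^ (q x) ∂μ ≤ K := by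
  obtain ⟨Ks, hKs, hst⟩ := strong_type μ hri
  obtain ⟨m, hm0, hm⟩ := tail_integrable μ hμ
  have hp1 : (1 : ℝ≥0∞) ≤ p := by exact_mod_cast (Fact.out : p.Prime).one_lt.le
  have hpt : (p : ℝ≥0∞) ≠ ⊤ := by simp
  have hQ0 : 0 ≤ Q := by linarith [hq1 0, hQ 0]
  have hqi0 : 0 < qi := by linarith
  set h : (Fin n → ℚ_[p]) → ℝ≥0∞ := fun y => (p : ℝ≥0∞) ^ (-(m * Dlog y)) with hh
  have hhm : Measurable h := measurable_const.pow (Dlog_measurable.const_mul m).neg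
  set J := ∫⁻ y, h y ∂μ with hJ
  set c : ℝ≥0∞ := (p : ℝ≥0∞) ^ (m * C) with hc
  have hct : c ≠ ⊤ := ENNReal.rpow_ne_top_of_nonneg (by positivity) hpt
  set K1 := c + J with hK1
  have hK1t : K1 ≠ ⊤ := ENNReal.add_ne_top.2 ⟨hct, hm⟩
  set K2 := max 1 (K1 ^ (a * qi)) with hK2
  have hK21 : 1 ≤ K2 := le_max_left _ _
  have hK2t : K2 ≠ ⊤ := (max_lt ENNReal.one_lt_top
    (ENNReal.rpow_lt_top_of_nonneg (by positivity) hK1t)).ne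
  have hK20 : K2 ≠ 0 := (zero_lt_one.trans_le hK21).ne'
  refine ⟨K2 ^ Q * (c * (K2 * (Ks * K1)) + J), ?_, fun g hg hg1 hgr => ?_⟩
  · refine ENNReal.mul_ne_top (ENNReal.rpow_ne_top_of_nonneg hQ0 hK2t) (ENNReal.add_ne_top.2 ⟨?_, hm⟩)
    exact ENNReal.mul_ne_top hct (ENNReal.mul_ne_top hK2t (ENNReal.mul_ne_top hKs hK1t))
  have hgri : ∫⁻ y, (g y) ^ ri ∂μ ≤ K1 := by
    calc ∫⁻ y, (g y) ^ ri ∂μ ≤ ∫⁻ y, (c * (g y) ^ (r y) + h y) ∂μ := by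
          refine lintegral_mono fun y => ?_
          refine compare_exp (hg1 y) hp1 hpt hri.le (zero_lt_one.trans_le (one_le_Dlog y)) hm0 hC ?_
          rw [abs_sub_comm]; exact hrc y
      _ = c * ∫⁻ y, (g y) ^ (r y) ∂μ + J := by
          rw [lintegral_add_right _ hhm, lintegral_const_mul _ (hg.pow hrm)]
      _ ≤ c * 1 + J := by gcongr
      _ = K1 := by rw [mul_one]
  have hbase : ∀ x (γ : ℤ), (μ (pBall x γ) ^ (a - 1) * ∫⁻ y in pBall x γ, g y ∂μ) ^ qi ≤
      K2 * ((μ (pBall x γ))⁻¹ * ∫⁻ y in pBall x γ, g y ∂μ) ^ ri := by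
    intro x γ
    have hb0 := pBall_pos μ x γ
    have hbt := pBall_top μ x γ
    rw [frac_alg hb0 hbt ha (by linarith) hqi0.le hqri, mul_comm]
    gcongr
    refine le_trans ?_ (le_max_right _ _)
    gcongr
    calc _ ≤ μ (pBall x γ) * ((μ (pBall x γ))⁻¹ * ∫⁻ y in pBall x γ, (g y) ^ ri ∂μ) := by
          gcongr
          exact jensen μ hri.le hg x γ
      _ = ∫⁻ y in pBall x γ, (g y) ^ ri ∂μ := by
          rw [← mul_assoc, ENNReal.mul_inv_cancel hb0 hbt, one_mul]
      _ ≤ K1 := (setLIntegral_le_lintegral _ _).trans hgri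
  have hM1 : ∀ x, (Mx μ a g x) ^ qi ≤ K2 * (Mx μ 0 g x) ^ ri := fun x =>
    Mx_rpow_le μ hqi0 g x fun γ => (hbase x γ).trans (by gcongr; exact le_Mx_zero μ g x γ)
  have hM2 : ∀ x, Mx μ a g x ≤ K2 := by
    intro x
    have h1 : (Mx μ a g x) ^ qi ≤ K2 := by
      refine Mx_rpow_le μ hqi0 g x fun γ => (hbase x γ).trans ?_
      have hA : (μ (pBall x γ))⁻¹ * ∫⁻ y in pBall x γ, g y ∂μ ≤ 1 := by
        calc _ ≤ (μ (pBall x γ))⁻¹ * ∫⁻ y in pBall x γ, 1 ∂μ := by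
              gcongr with y
              exact hg1 y
          _ = 1 := by
              rw [setLIntegral_const, one_mul,
                ENNReal.inv_mul_cancel (pBall_pos μ x γ) (pBall_top μ x γ)]
      calc _ ≤ K2 * 1 := by
            gcongr
            exact ENNReal.rpow_le_one hA (by linarith)
        _ = K2 := mul_one _
    rcases le_or_gt (Mx μ a g x) 1 with h2 | h2
    · exact h2.trans hK21
    · refine le_trans ?_ h1
      have := ENNReal.rpow_le_rpow_of_exponent_le h2.le hqi
      rwa [ENNReal.rpow_one] at this
  have hpt3 : ∀ x, (Mx μ a g x) ^ (q x) ≤ K2 ^ Q * (c * (K2 * (Mx μ 0 g x) ^ ri) + h x) := by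
    intro x
    set T := Mx μ a g x / K2 with hT
    have hT1 : T ≤ 1 := ENNReal.div_le_of_le_mul (by rw [one_mul]; exact hM2 x)
    have hTM : T ≤ Mx μ a g x := ENNReal.div_le_of_le_mul (by
      calc Mx μ a g x = Mx μ a g x * 1 := (mul_one _).symm
        _ ≤ _ := by gcongr)
    have hMT : Mx μ a g x = K2 * T := (ENNReal.mul_div_cancel hK20 hK2t).symm
    have hcomp := compare_exp hT1 hp1 hpt (hq1 x) (zero_lt_one.trans_le (one_le_Dlog x)) hm0 hC
      (hqc x)
    calc (Mx μ a g x) ^ (q x) = K2 ^ (q x) * T ^ (q x) := by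
          rw [hMT, ENNReal.mul_rpow_of_nonneg _ _ (by linarith [hq1 x])]
      _ ≤ K2 ^ Q * (c * T ^ qi + h x) := by
          exact mul_le_mul' (ENNReal.rpow_le_rpow_of_exponent_le hK21 (hQ x)) hcomp
      _ ≤ _ := by
          refine mul_le_mul_right (add_le_add_left (mul_le_mul_right ?_ _) _) _
          exact (ENNReal.rpow_le_rpow hTM hqi0.le).trans (hM1 x)
  have hMm : Measurable fun x => (Mx μ 0 g x) ^ ri := (Mx_measurable μ 0 g).pow_const ri
  calc ∫⁻ x, (Mx μ a g x) ^ (q x) ∂μ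
      ≤ ∫⁻ x, K2 ^ Q * (c * (K2 * (Mx μ 0 g x) ^ ri) + h x) ∂μ := lintegral_mono hpt3
    _ = K2 ^ Q * (c * (K2 * ∫⁻ x, (Mx μ 0 g x) ^ ri ∂μ) + J) := by
        have hmm : Measurable fun x => c * (K2 * (Mx μ 0 g x) ^ ri) + h x :=
          ((hMm.const_mul _).const_mul _).add hhm
        rw [lintegral_const_mul _ hmm,
          lintegral_add_right _ hhm, lintegral_const_mul _ (hMm.const_mul _),
          lintegral_const_mul _ hMm]
    _ ≤ _ := by
        gcongr
        exact (hst g hg).trans (by gcongr)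

theorem limit_exists {r : (Fin n → ℚ_[p]) → ℝ} {C : ℝ} (hC : 0 ≤ C)
    (hr : ∀ x y : Fin n → ℚ_[p], |r x - r y| ≤ C / Real.logb p ((p : ℝ) + min ‖x‖ ‖y‖))
    {xs : ℕ → (Fin n → ℚ_[p])} (hxs : ∀ k, (p : ℝ) ^ k ≤ ‖xs k‖) :
    ∃ ri : ℝ, Filter.Tendsto (fun k => r (xs k)) Filter.atTop (nhds ri) ∧
      ∀ x, |r x - ri| ≤ C / Dlog x := by
  have hc : CauchySeq (fun k => r (xs k)) := by
    refine cauchySeq_of_le_tendsto_0 (fun K : ℕ => C * (1 / ((max K 1 : ℕ) : ℝ))) ?_ ?_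
    · intro i j K hi hj
      rw [Real.dist_eq]
      refine (hr _ _).trans ?_
      rw [mul_one_div]
      have hK' : (0 : ℝ) < ((max K 1 : ℕ) : ℝ) := by
        exact_mod_cast lt_of_lt_of_le one_pos (le_max_right K 1)
      gcongr
      have hmin : (p : ℝ) ^ K ≤ min ‖xs i‖ ‖xs j‖ := le_min
        ((pow_le_pow_right₀ pp_one_lt.le hi).trans (hxs i))
        ((pow_le_pow_right₀ pp_one_lt.le hj).trans (hxs j))
      have hpk : (0 : ℝ) < (p : ℝ) ^ K := pow_pos pp_pos K
      rcases Nat.eq_zero_or_pos K with rfl | hK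
      · simpa using one_le_logb (p := p) (hpk.le.trans hmin)
      rw [max_eq_left hK,
        Real.le_logb_iff_rpow_le pp_one_lt (by linarith [pp_pos (p := p)]), Real.rpow_natCast]
      linarith [pp_pos (p := p)]
    · rw [← mul_zero C]
      refine Filter.Tendsto.const_mul C ?_
      refine tendsto_one_div_atTop_nhds_zero_nat.congr' ?_
      filter_upwards [Filter.eventually_ge_atTop 1] with K hK
      rw [max_eq_left hK]
  obtain ⟨ri, hri⟩ := cauchySeq_tendsto_of_complete hc
  refine ⟨ri, hri, fun x => ?_⟩
  have ht : Filter.Tendsto (fun k => |r x - r (xs k)|) Filter.atTop (nhds |r x - ri|) :=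
    (tendsto_const_nhds.sub hri).abs
  refine le_of_tendsto ht ?_
  obtain ⟨k0, hk0⟩ := pow_unbounded_of_one_lt ‖x‖ (pp_one_lt (p := p))
  filter_upwards [Filter.eventually_ge_atTop k0] with k hk
  have h1 : ‖x‖ ≤ ‖xs k‖ := hk0.le.trans ((pow_le_pow_right₀ pp_one_lt.le hk).trans (hxs k))
  have h2 := hr x (xs k)
  rwa [min_eq_left h1] at h2

end meas

theorem fracMax_bounded_variable
    (hn : 0 < n) [BorelSpace (Fin n → ℚ_[p])]
    (μ : Measure (Fin n → ℚ_[p])) [μ.IsAddHaarMeasure]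
    (hμ : μ (Metric.closedBall 0 1) = 1)
    (α : ℝ) (hα0 : 0 < α) (hαn : α < n)
    (r q : (Fin n → ℚ_[p]) → ℝ) (hrlog : IsLogHolder μ r) (hqlog : IsLogHolder μ q)
    (hrP : IsPExp μ r) (hrplus : essSup r μ < (n : ℝ) / α)
    (hrq : ∀ x, 1 / q x = 1 / r x - α / (n : ℝ)) :
    ∃ C : ℝ, 0 < C ∧ ∀ f : (Fin n → ℚ_[p]) → ℝ, Measurable f → luxNorm μ r f < ⊤ →
      luxNormE μ q (fracMax μ α f) ≤ ENNReal.ofReal C * luxNorm μ r f := by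
  have hn0 : (0 : ℝ) < n := by exact_mod_cast hn
  set a : ℝ := α / (n : ℝ) with ha
  have ha0 : 0 ≤ a := by positivity
  obtain ⟨hrm, hr1, C1, hC1, hrloc, hrinf⟩ := hrlog
  obtain ⟨hqm, hq1, C2, hC2, -, hqinf⟩ := hqlog
  obtain ⟨-, -, hrminus, -⟩ := hrP
  -- boundedness of the exponents
  have hbdd : ∀ {u : (Fin n → ℚ_[p]) → ℝ} {C : ℝ}, 0 ≤ C →
      (∀ x y : Fin n → ℚ_[p], |u x - u y| ≤ C / Real.logb p ((p : ℝ) + min ‖x‖ ‖y‖)) →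
      ∀ x, u x ≤ u 0 + C := by
    intro u C hC h x
    have h1 := h x 0
    have h2 : C / Real.logb p ((p : ℝ) + min ‖x‖ ‖(0 : Fin n → ℚ_[p])‖) ≤ C :=
      div_le_self hC (one_le_logb (le_min (norm_nonneg _) (norm_nonneg _)))
    linarith [le_abs_self (u x - u 0)]
  have hR := hbdd hC1 hrinf
  have hQ := hbdd hC2 hqinf
  have hqr : ∀ x, q x = r x + r x * (a * q x) := by
    intro x
    have h1 := hrq x
    have hr0 : r x ≠ 0 := by linarith [hr1 x]
    have hq0 : q x ≠ 0 := by linarith [hq1 x]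
    field_simp at h1
    linarith
  set s := essInf r μ with hs
  have hrs : ∀ᵐ x ∂μ, s ≤ r x := ae_essInf_le (Filter.isBoundedUnder_of ⟨1, hr1⟩)
  -- a sequence going to infinity, along which `s ≤ r`
  have hseq : ∀ k : ℕ, ∃ x : Fin n → ℚ_[p], (p : ℝ) ^ k ≤ ‖x‖ ∧ s ≤ r x := by
    intro k
    have hd : Dense {x | s ≤ r x} := Measure.dense_of_ae hrs
    have : Nonempty (Fin n) := ⟨⟨0, hn⟩⟩
    set z : Fin n → ℚ_[p] := fun _ => (p : ℚ_[p]) ^ (-((k + 1 : ℕ) : ℤ)) with hz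
    have hzn : ‖z‖ = (p : ℝ) ^ (k + 1) := by
      rw [hz, pi_norm_const, norm_zpow, Padic.norm_p, inv_zpow, zpow_neg, inv_inv, zpow_natCast]
    obtain ⟨y, hy1, hy2⟩ := hd.exists_mem_open (pBall_isOpen z 0) ⟨z, mem_pBall_self z 0⟩
    refine ⟨y, ?_, hy1⟩
    have h1 : ‖y - z‖ ≤ 1 := by simpa [pBall, dist_eq_norm] using hy2
    have h2 : ‖z‖ - ‖y - z‖ ≤ ‖y‖ := by
      have h5 : ‖y - (y - z)‖ ≤ ‖y‖ + ‖y - z‖ := norm_sub_le y (y - z)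
      have h6 : y - (y - z) = z := by
        ext i
        simp only [Pi.sub_apply]
        ring
      rw [h6] at h5
      linarith
    have h3 : (2 : ℝ) ≤ p := by exact_mod_cast (Fact.out : p.Prime).two_le
    have h4 : (1 : ℝ) ≤ (p : ℝ) ^ k := one_le_pow₀ (by linarith)
    rw [hzn, pow_succ] at h2
    nlinarith
  choose xs hxs hxr using hseq
  obtain ⟨ri, hri, hric⟩ := limit_exists hC1 hrinf hxs
  obtain ⟨qi, hqi, hqic⟩ := limit_exists hC2 hqinf hxs
  have hri1 : 1 < ri := hrminus.trans_le (ge_of_tendsto' hri hxr)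
  have hqi1 : 1 ≤ qi := ge_of_tendsto' hqi fun k => hq1 _
  have hqri : qi = ri + ri * (a * qi) := by
    refine tendsto_nhds_unique hqi ?_
    have := hri.add (hri.mul (hqi.const_mul a))
    refine this.congr fun k => ?_
    exact (hqr (xs k)).symm
  have hCle : ∀ {C : ℝ} (x : Fin n → ℚ_[p]), C ≤ max C1 C2 → C / Dlog x ≤ max C1 C2 / Dlog x := by
    intro C x h
    have := one_le_Dlog x
    gcongr
  obtain ⟨K1, hK1, hbig⟩ := big_part μ hμ hrm hrminus ha0 hr1 hR hC1 hq1 hQ hqr hrloc hrs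
  obtain ⟨K2, hK2, hsmall⟩ := small_part μ hμ hrm hqm ha0 (hC1.trans (le_max_left C1 C2)) hri1 hqi1
    hqri hq1 hQ (fun x => (hric x).trans (hCle x (le_max_left _ _)))
    (fun x => (hqic x).trans (hCle x (le_max_right _ _)))
  set Q := q 0 + C2 with hQdef
  have hQ1 : 1 ≤ Q := by linarith [hq1 0]
  set K3 : ℝ≥0∞ := max 1 (2 ^ (Q - 1) * (K1 + K2)) with hK3
  have hK31 : 1 ≤ K3 := le_max_left _ _
  have hK3t : K3 ≠ ⊤ := (max_lt ENNReal.one_lt_top (ENNReal.mul_lt_top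
    (ENNReal.rpow_lt_top_of_nonneg (by linarith) (by norm_num))
    (ENNReal.add_lt_top.2 ⟨hK1.lt_top, hK2.lt_top⟩))).ne
  have hK30 : K3 ≠ 0 := (zero_lt_one.trans_le hK31).ne'
  refine ⟨K3.toReal, ENNReal.toReal_pos hK30 hK3t, fun f hf _ => ?_⟩
  rw [ENNReal.ofReal_toReal hK3t, mul_comm]
  refine (ENNReal.div_le_iff_le_mul (Or.inl hK30) (Or.inl hK3t)).1 ?_
  refine le_sInf ?_
  rintro η ⟨hη0, hηt, hη⟩
  refine (ENNReal.div_le_iff_le_mul (Or.inl hK30) (Or.inl hK3t)).2 ?_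
  refine sInf_le ⟨ENNReal.mul_pos hη0.ne' hK30, ENNReal.mul_lt_top hηt hK3t.lt_top, ?_⟩
  set g : (Fin n → ℚ_[p]) → ℝ≥0∞ := fun x => (‖f x‖₊ : ℝ≥0∞) / η with hg
  have hgm : Measurable g := (hf.nnnorm.coe_nnreal_ennreal).div_const η
  set g1 : (Fin n → ℚ_[p]) → ℝ≥0∞ := {y | 1 < g y}.indicator g with hg1
  set g2 : (Fin n → ℚ_[p]) → ℝ≥0∞ := {y | 1 < g y}ᶜ.indicator g with hg2
  have hgset : MeasurableSet {y | 1 < g y} := measurableSet_lt measurable_const hgm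
  have hg1m : Measurable g1 := hgm.indicator hgset
  have hg2m : Measurable g2 := hgm.indicator hgset.compl
  have hg1le : ∀ y, g1 y ≤ g y := fun y => Set.indicator_le_self _ _ y
  have hg2le : ∀ y, g2 y ≤ g y := fun y => Set.indicator_le_self _ _ y
  have hmod : ∀ {u : (Fin n → ℚ_[p]) → ℝ≥0∞}, (∀ y, u y ≤ g y) → ∫⁻ y, (u y) ^ (r y) ∂μ ≤ 1 := by
    intro u hu
    refine le_trans (lintegral_mono fun y => ?_) hη
    exact ENNReal.rpow_le_rpow (hu y) (by linarith [hr1 y])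
  have hb := hbig g1 hg1m (fun y => by
    by_cases h : 1 < g y
    · right
      rw [hg1, Set.indicator_of_mem (show y ∈ {y | 1 < g y} from h)]
      exact h.le
    · left
      exact Set.indicator_of_notMem (show y ∉ {y | 1 < g y} from h) _) (hmod hg1le)
  have hsm := hsmall g2 hg2m (fun y => by
    by_cases h : 1 < g y
    · rw [hg2, Set.indicator_of_notMem (by simpa using h)]
      exact zero_le_one
    · exact (hg2le y).trans (not_lt.1 h)) (hmod hg2le)
  have hMadd : ∀ x, fracMax μ α f x / η ≤ Mx μ a g1 x + Mx μ a g2 x := by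
    intro x
    refine ENNReal.div_le_of_le_mul ?_
    refine iSup_le fun γ => ?_
    have h1 : ∫⁻ y in pBall x γ, (‖f y‖₊ : ℝ≥0∞) ∂μ =
        (∫⁻ y in pBall x γ, g1 y ∂μ + ∫⁻ y in pBall x γ, g2 y ∂μ) * η := by
      have hm12 : Measurable fun y => g1 y + g2 y := hg1m.add hg2m
      rw [← lintegral_add_left hg1m, ← lintegral_mul_const _ hm12]
      refine lintegral_congr fun y => ?_
      have h2 : g1 y + g2 y = g y := by
        rw [hg1, hg2]
        exact congrFun (Set.indicator_self_add_compl {y | 1 < g y} g) y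
      rw [h2, hg]
      exact (ENNReal.div_mul_cancel hη0.ne' hηt.ne).symm
    rw [h1, ← mul_assoc, mul_add]
    refine mul_le_mul_left (add_le_add ?_ ?_) _
    · exact le_iSup (fun γ : ℤ => μ (pBall x γ) ^ (a - 1) * ∫⁻ y in pBall x γ, g1 y ∂μ) γ
    · exact le_iSup (fun γ : ℤ => μ (pBall x γ) ^ (a - 1) * ∫⁻ y in pBall x γ, g2 y ∂μ) γ
  have hpt : ∀ x, (fracMax μ α f x / (η * K3)) ^ q x ≤
      K3⁻¹ * (2 ^ (Q - 1) * ((Mx μ a g1 x) ^ q x + (Mx μ a g2 x) ^ q x)) := by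
    intro x
    have hqx : 0 ≤ q x := by linarith [hq1 x]
    have e : fracMax μ α f x / (η * K3) = K3⁻¹ * (fracMax μ α f x / η) := by
      rw [div_eq_mul_inv, ENNReal.mul_inv (Or.inl hη0.ne') (Or.inl hηt.ne), div_eq_mul_inv]
      ring
    rw [e, ENNReal.mul_rpow_of_nonneg _ _ hqx]
    refine mul_le_mul' ?_ ?_
    · have := ENNReal.rpow_le_rpow_of_exponent_ge (ENNReal.inv_le_one.2 hK31) (hq1 x)
      rwa [ENNReal.rpow_one] at this
    · refine (ENNReal.rpow_le_rpow (hMadd x) hqx).trans ?_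
      refine (ENNReal.rpow_add_le_mul_rpow_add_rpow _ _ (hq1 x)).trans ?_
      refine mul_le_mul_left (ENNReal.rpow_le_rpow_of_exponent_le (by norm_num) ?_) _
      linarith [hQ x]
  have hm1 : Measurable fun x => (Mx μ a g1 x) ^ q x := (Mx_measurable μ a g1).pow hqm
  have hm2 : Measurable fun x => (Mx μ a g2 x) ^ q x := (Mx_measurable μ a g2).pow hqm
  calc ∫⁻ x, (fracMax μ α f x / (η * K3)) ^ q x ∂μ
      ≤ ∫⁻ x, K3⁻¹ * (2 ^ (Q - 1) * ((Mx μ a g1 x) ^ q x + (Mx μ a g2 x) ^ q x)) ∂μ :=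
        lintegral_mono hpt
    _ = K3⁻¹ * (2 ^ (Q - 1) * (∫⁻ x, (Mx μ a g1 x) ^ q x ∂μ + ∫⁻ x, (Mx μ a g2 x) ^ q x ∂μ)) := by
        have hm12 : Measurable fun x => (Mx μ a g1 x) ^ q x + (Mx μ a g2 x) ^ q x := hm1.add hm2
        rw [lintegral_const_mul _ (hm12.const_mul _), lintegral_const_mul _ hm12,
          lintegral_add_left hm1]
    _ ≤ K3⁻¹ * (2 ^ (Q - 1) * (K1 + K2)) := by gcongr
    _ ≤ K3⁻¹ * K3 := by gcongr; exact le_max_right _ _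
    _ = 1 := ENNReal.inv_mul_cancel hK30 hK3t

end
end
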